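/- Let (η, ϕ) be a smooth solution of the three-dimensional water-wave system on [0,T], with (conserved) energy 𝓗 := 𝓗(0). Assume η(t,x) ≥ −4h/9 for all (t,x), and that there exist positive constants A, B such that B < 2/9, T ≥ (4/(2 − 9B))·(1 + 7·max{L₁,L₂}·A/√g), sup_{t∈[0,T]} ‖∇η(t,·)‖_{L^∞(Q)} ≤ B and sup_{t∈[0,T]} ‖∇ψ(t,·)‖_{L²(Q)} ≤ A·√(2𝓗). Then 𝓑(T) ≥ 𝓗. -/

import Mathlib

open Real Set MeasureTheory

noncomputable section

/-- `∂_{x₁}ϕ(t,x₁,x₂,y)` -/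
def phiX1 (ϕ : ℝ → ℝ → ℝ → ℝ → ℝ) (t x₁ x₂ y : ℝ) : ℝ := deriv (fun s => ϕ t s x₂ y) x₁

/-- `∂_{x₂}ϕ(t,x₁,x₂,y)` -/
def phiX2 (ϕ : ℝ → ℝ → ℝ → ℝ → ℝ) (t x₁ x₂ y : ℝ) : ℝ := deriv (fun s => ϕ t x₁ s y) x₂

/-- `∂_yϕ(t,x₁,x₂,y)` -/
def phiY3 (ϕ : ℝ → ℝ → ℝ → ℝ → ℝ) (t x₁ x₂ y : ℝ) : ℝ := deriv (fun s => ϕ t x₁ x₂ s) y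

/-- `∂ₜϕ(t,x₁,x₂,y)` -/
def phiT3 (ϕ : ℝ → ℝ → ℝ → ℝ → ℝ) (t x₁ x₂ y : ℝ) : ℝ := deriv (fun s => ϕ s x₁ x₂ y) t

/-- `|∇_{x,y}ϕ|²(t,x₁,x₂,y)` -/
def gradSq3 (ϕ : ℝ → ℝ → ℝ → ℝ → ℝ) (t x₁ x₂ y : ℝ) : ℝ :=
  (phiX1 ϕ t x₁ x₂ y) ^ 2 + (phiX2 ϕ t x₁ x₂ y) ^ 2 + (phiY3 ϕ t x₁ x₂ y) ^ 2

/-- `|∇ₓϕ|²(t,x₁,x₂,y)` (horizontal gradient) -/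
def gradXSq3 (ϕ : ℝ → ℝ → ℝ → ℝ → ℝ) (t x₁ x₂ y : ℝ) : ℝ :=
  (phiX1 ϕ t x₁ x₂ y) ^ 2 + (phiX2 ϕ t x₁ x₂ y) ^ 2

/-- `∂_{x₁}η(t,x₁,x₂)` -/
def etaX1 (η : ℝ → ℝ → ℝ → ℝ) (t x₁ x₂ : ℝ) : ℝ := deriv (fun s => η t s x₂) x₁

/-- `∂_{x₂}η(t,x₁,x₂)` -/
def etaX2 (η : ℝ → ℝ → ℝ → ℝ) (t x₁ x₂ : ℝ) : ℝ := deriv (fun s => η t x₁ s) x₂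

/-- `∂ₜη(t,x₁,x₂)` -/
def etaT3 (η : ℝ → ℝ → ℝ → ℝ) (t x₁ x₂ : ℝ) : ℝ := deriv (fun s => η s x₁ x₂) t

/-- the trace `ψ(t,x) = ϕ(t,x,η(t,x))` -/
def psi3 (η : ℝ → ℝ → ℝ → ℝ) (ϕ : ℝ → ℝ → ℝ → ℝ → ℝ) (t x₁ x₂ : ℝ) : ℝ :=
  ϕ t x₁ x₂ (η t x₁ x₂)

/-- `∂ₜψ(t,x₁,x₂)` -/
def psi3T (η : ℝ → ℝ → ℝ → ℝ) (ϕ : ℝ → ℝ → ℝ → ℝ → ℝ) (t x₁ x₂ : ℝ) : ℝ :=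
  deriv (fun s => psi3 η ϕ s x₁ x₂) t

/-- `∂_{x₁}ψ(t,x₁,x₂)` -/
def psi3X1 (η : ℝ → ℝ → ℝ → ℝ) (ϕ : ℝ → ℝ → ℝ → ℝ → ℝ) (t x₁ x₂ : ℝ) : ℝ :=
  deriv (fun s => psi3 η ϕ t s x₂) x₁

/-- `∂_{x₂}ψ(t,x₁,x₂)` -/
def psi3X2 (η : ℝ → ℝ → ℝ → ℝ) (ϕ : ℝ → ℝ → ℝ → ℝ → ℝ) (t x₁ x₂ : ℝ) : ℝ :=
  deriv (fun s => psi3 η ϕ t x₁ s) x₂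

/-- `Θ(t,x) = -η ∂ₜψ - (g/2) η²` -/
def Theta3 (g : ℝ) (η : ℝ → ℝ → ℝ → ℝ) (ϕ : ℝ → ℝ → ℝ → ℝ → ℝ) (t x₁ x₂ : ℝ) : ℝ :=
  -(η t x₁ x₂) * psi3T η ϕ t x₁ x₂ - g / 2 * (η t x₁ x₂) ^ 2

/-- the energy `𝓗(t)` -/
def energy3D (L₁ L₂ h g : ℝ) (η : ℝ → ℝ → ℝ → ℝ) (ϕ : ℝ → ℝ → ℝ → ℝ → ℝ) (t : ℝ) : ℝ :=
  g / 2 * (∫ x₁ in (0:ℝ)..L₁, ∫ x₂ in (0:ℝ)..L₂, (η t x₁ x₂) ^ 2)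
    + 1 / 2 * ∫ x₁ in (0:ℝ)..L₁, ∫ x₂ in (0:ℝ)..L₂, ∫ y in (-h)..(η t x₁ x₂),
        gradSq3 ϕ t x₁ x₂ y

/-- the boundary observation `𝓑(T)` -/
def bigB (L₁ L₂ g T : ℝ) (η : ℝ → ℝ → ℝ → ℝ) (ϕ : ℝ → ℝ → ℝ → ℝ → ℝ) : ℝ :=
  ∫ t in (0:ℝ)..T,
    (L₁ * (∫ x₂ in (0:ℝ)..L₂, Theta3 g η ϕ t L₁ x₂)
      + L₂ * ∫ x₁ in (0:ℝ)..L₁, Theta3 g η ϕ t x₁ L₂)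

/-- the positive boundary term `P` -/
def bigP (L₁ L₂ h T : ℝ) (η : ℝ → ℝ → ℝ → ℝ) (ϕ : ℝ → ℝ → ℝ → ℝ → ℝ) : ℝ :=
  1 / 2 * ∫ t in (0:ℝ)..T,
    (L₁ * (∫ x₂ in (0:ℝ)..L₂, ∫ y in (-h)..(η t L₁ x₂), gradSq3 ϕ t L₁ x₂ y)
      + L₂ * (∫ x₁ in (0:ℝ)..L₁, ∫ y in (-h)..(η t x₁ L₂), gradSq3 ϕ t x₁ L₂ y)
      + h * ∫ x₁ in (0:ℝ)..L₁, ∫ x₂ in (0:ℝ)..L₂, gradSq3 ϕ t x₁ x₂ (-h))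

/-- A smooth solution of the three-dimensional water-wave system on `[0,T]`,
in the tank over `Q = [0,L₁] × [0,L₂]`. -/
structure IsWW3D (L₁ L₂ h g T : ℝ) (η : ℝ → ℝ → ℝ → ℝ)
    (ϕ : ℝ → ℝ → ℝ → ℝ → ℝ) : Prop where
  smooth_eta : ContDiff ℝ (⊤ : ℕ∞) (fun p : ℝ × ℝ × ℝ => η p.1 p.2.1 p.2.2)
  smooth_phi : ContDiff ℝ (⊤ : ℕ∞) (fun p : ℝ × ℝ × ℝ × ℝ => ϕ p.1 p.2.1 p.2.2.1 p.2.2.2)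
  eta_lower : ∀ t ∈ Icc (0:ℝ) T, ∀ x₁ ∈ Icc (0:ℝ) L₁, ∀ x₂ ∈ Icc (0:ℝ) L₂,
    -h / 2 ≤ η t x₁ x₂
  eta_mean : ∀ t ∈ Icc (0:ℝ) T,
    (∫ x₁ in (0:ℝ)..L₁, ∫ x₂ in (0:ℝ)..L₂, η t x₁ x₂) = 0
  laplace : ∀ t ∈ Icc (0:ℝ) T, ∀ x₁ ∈ Icc (0:ℝ) L₁, ∀ x₂ ∈ Icc (0:ℝ) L₂,
    ∀ y ∈ Icc (-h) (η t x₁ x₂),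
      deriv (fun s => phiX1 ϕ t s x₂ y) x₁ + deriv (fun s => phiX2 ϕ t x₁ s y) x₂
        + deriv (fun s => phiY3 ϕ t x₁ x₂ s) y = 0
  bc_x1 : ∀ t ∈ Icc (0:ℝ) T, ∀ x₁ ∈ ({0, L₁} : Set ℝ), ∀ x₂ ∈ Icc (0:ℝ) L₂,
    ∀ y ∈ Icc (-h) (η t x₁ x₂), phiX1 ϕ t x₁ x₂ y = 0
  bc_x2 : ∀ t ∈ Icc (0:ℝ) T, ∀ x₂ ∈ ({0, L₂} : Set ℝ), ∀ x₁ ∈ Icc (0:ℝ) L₁,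
    ∀ y ∈ Icc (-h) (η t x₁ x₂), phiX2 ϕ t x₁ x₂ y = 0
  bc_bottom : ∀ t ∈ Icc (0:ℝ) T, ∀ x₁ ∈ Icc (0:ℝ) L₁, ∀ x₂ ∈ Icc (0:ℝ) L₂,
    phiY3 ϕ t x₁ x₂ (-h) = 0
  kinematic : ∀ t ∈ Icc (0:ℝ) T, ∀ x₁ ∈ Icc (0:ℝ) L₁, ∀ x₂ ∈ Icc (0:ℝ) L₂,
    etaT3 η t x₁ x₂
      = phiY3 ϕ t x₁ x₂ (η t x₁ x₂)
        - (etaX1 η t x₁ x₂ * phiX1 ϕ t x₁ x₂ (η t x₁ x₂)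
            + etaX2 η t x₁ x₂ * phiX2 ϕ t x₁ x₂ (η t x₁ x₂))
  bernoulli : ∀ t ∈ Icc (0:ℝ) T, ∀ x₁ ∈ Icc (0:ℝ) L₁, ∀ x₂ ∈ Icc (0:ℝ) L₂,
    phiT3 ϕ t x₁ x₂ (η t x₁ x₂)
      + 1 / 2 * ((phiX1 ϕ t x₁ x₂ (η t x₁ x₂)) ^ 2
          + (phiX2 ϕ t x₁ x₂ (η t x₁ x₂)) ^ 2 + (phiY3 ϕ t x₁ x₂ (η t x₁ x₂)) ^ 2)
      + g * η t x₁ x₂ = 0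
  etaX1_bc : ∀ t ∈ Icc (0:ℝ) T, ∀ x₁ ∈ ({0, L₁} : Set ℝ), ∀ x₂ ∈ Icc (0:ℝ) L₂,
    etaX1 η t x₁ x₂ = 0
  etaX2_bc : ∀ t ∈ Icc (0:ℝ) T, ∀ x₂ ∈ ({0, L₂} : Set ℝ), ∀ x₁ ∈ Icc (0:ℝ) L₁,
    etaX2 η t x₁ x₂ = 0

/-! ### calculus lemmas -/

lemma ww_deriv_param (f f' : ℝ → ℝ → ℝ) (a b s₀ : ℝ)
    (hf : Continuous (fun p : ℝ × ℝ => f p.1 p.2))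
    (hf' : Continuous (fun p : ℝ × ℝ => f' p.1 p.2))
    (hd : ∀ s y, HasDerivAt (fun u => f u y) (f' s y) s) :
    HasDerivAt (fun s => ∫ y in a..b, f s y) (∫ y in a..b, f' s₀ y) s₀ := by
  have hK : IsCompact (Icc (s₀ - 1) (s₀ + 1) ×ˢ uIcc a b) := isCompact_Icc.prod isCompact_uIcc
  obtain ⟨C, hC⟩ := hK.exists_bound_of_continuousOn hf'.continuousOn
  refine (intervalIntegral.hasDerivAt_integral_of_dominated_loc_of_deriv_le
    (F := f) (F' := f') (bound := fun _ => C) (s := Icc (s₀ - 1) (s₀ + 1))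
    (Icc_mem_nhds (by linarith) (by linarith)) ?_ ?_ ?_ ?_ ?_ ?_).2
  · refine Filter.Eventually.of_forall fun x => ?_
    have : Continuous (f x) := by fun_prop
    exact this.aestronglyMeasurable
  · have : Continuous (f s₀) := by fun_prop
    exact this.intervalIntegrable _ _
  · have : Continuous (f' s₀) := by fun_prop
    exact this.aestronglyMeasurable
  · refine Filter.Eventually.of_forall fun y hy x hx => ?_
    exact hC (x, y) ⟨hx, uIoc_subset_uIcc hy⟩
  · exact intervalIntegrable_const
  · exact Filter.Eventually.of_forall fun y hy x hx => hd x y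

lemma ww_leibniz (f f' : ℝ → ℝ → ℝ) (a s₀ : ℝ) (b : ℝ → ℝ) (b' : ℝ)
    (hf : Continuous (fun p : ℝ × ℝ => f p.1 p.2))
    (hf' : Continuous (fun p : ℝ × ℝ => f' p.1 p.2))
    (hd : ∀ s y, HasDerivAt (fun u => f u y) (f' s y) s)
    (hb : HasDerivAt b b' s₀) :
    HasDerivAt (fun s => ∫ y in a..(b s), f s y)
      ((∫ y in a..(b s₀), f' s₀ y) + f s₀ (b s₀) * b') s₀ := by
  have key := hasStrictFDerivAt_uncurry_coprod (𝕜 := ℝ) (u := (s₀, b s₀))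
    (f := fun s r => ∫ y in a..r, f s y)
    (f₁ := fun s r => ContinuousLinearMap.toSpanSingleton ℝ (∫ y in a..r, f' s y))
    (f₂ := fun s r => ContinuousLinearMap.toSpanSingleton ℝ (f s r))
    (Filter.Eventually.of_forall fun v =>
      (ww_deriv_param f f' a v.2 v.1 hf hf' hd).hasFDerivAt)
    (Filter.Eventually.of_forall fun v => by
      have hc : Continuous (f v.1) := by fun_prop
      exact (intervalIntegral.integral_hasDerivAt_right (hc.intervalIntegrable _ _)
        (hc.stronglyMeasurableAtFilter _ _) hc.continuousAt).hasFDerivAt)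
    (by
      apply Continuous.continuousAt
      have : Continuous (fun v : ℝ × ℝ => ∫ y in a..v.2, f' v.1 y) := by
        apply intervalIntegral.continuous_parametric_intervalIntegral_of_continuous
        · simp only [Function.uncurry_def]; fun_prop
        · fun_prop
      exact (LinearMap.continuous_of_finiteDimensional
        (ContinuousLinearMap.toSpanSingletonLE ℝ ℝ ℝ).toLinearMap).comp this)
    (by
      apply Continuous.continuousAt
      exact (LinearMap.continuous_of_finiteDimensional
        (ContinuousLinearMap.toSpanSingletonLE ℝ ℝ ℝ).toLinearMap).comp hf)
  have hc : HasDerivAt (fun s => (s, b s)) (1, b') s₀ := (hasDerivAt_id s₀).prodMk hb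
  have := key.hasFDerivAt.comp_hasDerivAt s₀ hc
  have h2 : HasDerivAt (fun s => ∫ y in a..(b s), f s y) _ s₀ := this
  refine h2.congr_deriv ?_
  simp [Function.HasUncurry.uncurry]
  ring

lemma ww_swap (G : ℝ → ℝ → ℝ) (hG : Continuous (fun p : ℝ × ℝ => G p.1 p.2)) (a b c d : ℝ) :
    ∫ x in a..b, ∫ y in c..d, G x y = ∫ y in c..d, ∫ x in a..b, G x y := by
  apply intervalIntegral_intervalIntegral_swap
  have : IntegrableOn (Function.uncurry G) (uIcc a b ×ˢ uIcc c d) :=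
    ContinuousOn.integrableOn_compact (isCompact_uIcc.prod isCompact_uIcc)
      (by simp only [Function.uncurry_def]; exact hG.continuousOn)
  exact this.mono_set (prod_mono uIoc_subset_uIcc uIoc_subset_uIcc)

lemma ww_cont1 (G : ℝ → ℝ → ℝ) (hG : Continuous (fun p : ℝ × ℝ => G p.1 p.2)) (c d : ℝ) :
    Continuous (fun x => ∫ y in c..d, G x y) :=
  intervalIntegral.continuous_parametric_intervalIntegral_of_continuous'
    (by simpa only [Function.uncurry_def] using hG) c d

lemma ww_int_d1 (G G' : ℝ → ℝ → ℝ) (a b c d : ℝ)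
    (hG' : Continuous (fun p : ℝ × ℝ => G' p.1 p.2))
    (hd : ∀ x y, HasDerivAt (fun u => G u y) (G' x y) x) :
    ∫ x in a..b, ∫ y in c..d, G' x y = ∫ y in c..d, (G b y - G a y) := by
  rw [ww_swap G' hG']
  congr 1; funext y
  apply intervalIntegral.integral_eq_sub_of_hasDerivAt (fun x _ => hd x y)
  have : Continuous (fun x => G' x y) := by fun_prop
  exact this.intervalIntegrable _ _

lemma ww_int_d2 (G G' : ℝ → ℝ → ℝ) (a b c d : ℝ)
    (hG' : Continuous (fun p : ℝ × ℝ => G' p.1 p.2))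
    (hd : ∀ x y, HasDerivAt (fun u => G x u) (G' x y) y) :
    ∫ x in a..b, ∫ y in c..d, G' x y = ∫ x in a..b, (G x d - G x c) := by
  congr 1; funext x
  apply intervalIntegral.integral_eq_sub_of_hasDerivAt (fun y _ => hd x y)
  have : Continuous (fun y => G' x y) := by fun_prop
  exact this.intervalIntegrable _ _

lemma ww_int2_add (F G : ℝ → ℝ → ℝ) (a b c d : ℝ)
    (hF : Continuous (fun p : ℝ × ℝ => F p.1 p.2))
    (hG : Continuous (fun p : ℝ × ℝ => G p.1 p.2)) :
    ∫ x in a..b, ∫ y in c..d, (F x y + G x y)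
      = (∫ x in a..b, ∫ y in c..d, F x y) + ∫ x in a..b, ∫ y in c..d, G x y := by
  rw [← intervalIntegral.integral_add ((ww_cont1 F hF c d).intervalIntegrable _ _)
    ((ww_cont1 G hG c d).intervalIntegrable _ _)]
  congr 1; funext x
  have h1 : Continuous (F x) := by fun_prop
  have h2 : Continuous (G x) := by fun_prop
  exact intervalIntegral.integral_add (h1.intervalIntegrable _ _) (h2.intervalIntegrable _ _)

lemma ww_int2_smul (F : ℝ → ℝ → ℝ) (k a b c d : ℝ) :
    ∫ x in a..b, ∫ y in c..d, (k * F x y) = k * ∫ x in a..b, ∫ y in c..d, F x y := by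
  simp only [intervalIntegral.integral_const_mul]

lemma ww_int2_mono (F G : ℝ → ℝ → ℝ) (a b c d : ℝ) (hab : a ≤ b) (hcd : c ≤ d)
    (hF : Continuous (fun p : ℝ × ℝ => F p.1 p.2))
    (hG : Continuous (fun p : ℝ × ℝ => G p.1 p.2))
    (h : ∀ x ∈ Icc a b, ∀ y ∈ Icc c d, F x y ≤ G x y) :
    ∫ x in a..b, ∫ y in c..d, F x y ≤ ∫ x in a..b, ∫ y in c..d, G x y := by
  apply intervalIntegral.integral_mono_on hab ((ww_cont1 F hF c d).intervalIntegrable _ _)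
    ((ww_cont1 G hG c d).intervalIntegrable _ _)
  intro x hx
  have h1 : Continuous (F x) := by fun_prop
  have h2 : Continuous (G x) := by fun_prop
  exact intervalIntegral.integral_mono_on hcd (h1.intervalIntegrable _ _)
    (h2.intervalIntegrable _ _) (h x hx)

lemma ww_int2_congr (F G : ℝ → ℝ → ℝ) (a b c d : ℝ) (hab : a ≤ b) (hcd : c ≤ d)
    (h : ∀ x ∈ Icc a b, ∀ y ∈ Icc c d, F x y = G x y) :
    ∫ x in a..b, ∫ y in c..d, F x y = ∫ x in a..b, ∫ y in c..d, G x y := by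
  apply intervalIntegral.integral_congr
  intro x hx
  apply intervalIntegral.integral_congr
  intro y hy
  rw [uIcc_of_le hab] at hx
  rw [uIcc_of_le hcd] at hy
  exact h x hx y hy

lemma ww_int2_deriv (F F' : ℝ → ℝ → ℝ → ℝ) (a b c d t₀ : ℝ)
    (hF : Continuous (fun p : ℝ × ℝ × ℝ => F p.1 p.2.1 p.2.2))
    (hF' : Continuous (fun p : ℝ × ℝ × ℝ => F' p.1 p.2.1 p.2.2))
    (hd : ∀ t x y, HasDerivAt (fun u => F u x y) (F' t x y) t) :
    HasDerivAt (fun t => ∫ x in a..b, ∫ y in c..d, F t x y)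
      (∫ x in a..b, ∫ y in c..d, F' t₀ x y) t₀ := by
  apply ww_deriv_param (fun t x => ∫ y in c..d, F t x y) (fun t x => ∫ y in c..d, F' t x y)
  · apply intervalIntegral.continuous_parametric_intervalIntegral_of_continuous'
    simp only [Function.uncurry_def]; fun_prop
  · apply intervalIntegral.continuous_parametric_intervalIntegral_of_continuous'
    simp only [Function.uncurry_def]; fun_prop
  · intro t x
    apply ww_deriv_param (fun t y => F t x y) (fun t y => F' t x y)
    · fun_prop
    · fun_prop
    · intro t y; exact hd t x y

lemma ww_int2_cont (F : ℝ → ℝ → ℝ → ℝ) (a b c d : ℝ)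
    (hF : Continuous (fun p : ℝ × ℝ × ℝ => F p.1 p.2.1 p.2.2)) :
    Continuous (fun t => ∫ x in a..b, ∫ y in c..d, F t x y) := by
  apply ww_cont1 (fun t x => ∫ y in c..d, F t x y)
  apply intervalIntegral.continuous_parametric_intervalIntegral_of_continuous'
  simp only [Function.uncurry_def]; fun_prop

/-- the divergence theorem under a graph -/
lemma ww_div (L₁ L₂ h : ℝ) (e e1 e2 : ℝ → ℝ → ℝ) (U U1 V V2 W W3 : ℝ → ℝ → ℝ → ℝ)
    (he : Continuous (fun p : ℝ × ℝ => e p.1 p.2))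
    (he1 : Continuous (fun p : ℝ × ℝ => e1 p.1 p.2))
    (he2 : Continuous (fun p : ℝ × ℝ => e2 p.1 p.2))
    (hU : Continuous (fun p : ℝ × ℝ × ℝ => U p.1 p.2.1 p.2.2))
    (hU1 : Continuous (fun p : ℝ × ℝ × ℝ => U1 p.1 p.2.1 p.2.2))
    (hV : Continuous (fun p : ℝ × ℝ × ℝ => V p.1 p.2.1 p.2.2))
    (hV2 : Continuous (fun p : ℝ × ℝ × ℝ => V2 p.1 p.2.1 p.2.2))
    (hW : Continuous (fun p : ℝ × ℝ × ℝ => W p.1 p.2.1 p.2.2))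
    (hW3 : Continuous (fun p : ℝ × ℝ × ℝ => W3 p.1 p.2.1 p.2.2))
    (de1 : ∀ x y, HasDerivAt (fun u => e u y) (e1 x y) x)
    (de2 : ∀ x y, HasDerivAt (fun u => e x u) (e2 x y) y)
    (dU : ∀ x y z, HasDerivAt (fun u => U u y z) (U1 x y z) x)
    (dV : ∀ x y z, HasDerivAt (fun u => V x u z) (V2 x y z) y)
    (dW : ∀ x y z, HasDerivAt (fun u => W x y u) (W3 x y z) z) :
    ∫ x in (0:ℝ)..L₁, ∫ y in (0:ℝ)..L₂,
        (W x y (e x y) - U x y (e x y) * e1 x y - V x y (e x y) * e2 x y)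
      = (∫ x in (0:ℝ)..L₁, ∫ y in (0:ℝ)..L₂, ∫ z in (-h)..(e x y),
          (U1 x y z + V2 x y z + W3 x y z))
        + (∫ x in (0:ℝ)..L₁, ∫ y in (0:ℝ)..L₂, W x y (-h))
        - (∫ y in (0:ℝ)..L₂, ((∫ z in (-h)..(e L₁ y), U L₁ y z) - ∫ z in (-h)..(e 0 y), U 0 y z))
        - ∫ x in (0:ℝ)..L₁, ((∫ z in (-h)..(e x L₂), V x L₂ z) - ∫ z in (-h)..(e x 0), V x 0 z) := by
  have cI : ∀ F : ℝ → ℝ → ℝ → ℝ, Continuous (fun p : ℝ × ℝ × ℝ => F p.1 p.2.1 p.2.2) →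
      Continuous (fun p : ℝ × ℝ => ∫ z in (-h)..(e p.1 p.2), F p.1 p.2 z) := by
    intro F hF
    apply intervalIntegral.continuous_parametric_intervalIntegral_of_continuous
    · simp only [Function.uncurry_def]; fun_prop
    · fun_prop
  have hc1 := cI U1 hU1
  have hc2 := cI V2 hV2
  have hc3 := cI W3 hW3
  have E1 := ww_int_d1 (fun x y => ∫ z in (-h)..(e x y), U x y z)
    (fun x y => (∫ z in (-h)..(e x y), U1 x y z) + U x y (e x y) * e1 x y) 0 L₁ 0 L₂
    (hc1.add (by fun_prop))
    (fun x y => ww_leibniz (fun u z => U u y z) (fun u z => U1 u y z) (-h) x (fun u => e u y) (e1 x y)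
      (by fun_prop) (by fun_prop) (fun s z => dU s y z) (de1 x y))
  have E2 := ww_int_d2 (fun x y => ∫ z in (-h)..(e x y), V x y z)
    (fun x y => (∫ z in (-h)..(e x y), V2 x y z) + V x y (e x y) * e2 x y) 0 L₁ 0 L₂
    (hc2.add (by fun_prop))
    (fun x y => ww_leibniz (fun u z => V x u z) (fun u z => V2 x u z) (-h) y (fun u => e x u) (e2 x y)
      (by fun_prop) (by fun_prop) (fun s z => dV x s z) (de2 x y))
  have E3 : ∀ x y, ∫ z in (-h)..(e x y), W3 x y z = W x y (e x y) - W x y (-h) := by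
    intro x y
    apply intervalIntegral.integral_eq_sub_of_hasDerivAt (fun z _ => dW x y z)
    have : Continuous (fun z => W3 x y z) := by fun_prop
    exact this.intervalIntegrable _ _
  have E4 : ∀ x y, ∫ z in (-h)..(e x y), (U1 x y z + V2 x y z + W3 x y z)
      = (∫ z in (-h)..(e x y), U1 x y z) + (∫ z in (-h)..(e x y), V2 x y z)
        + ∫ z in (-h)..(e x y), W3 x y z := by
    intro x y
    have h1 : Continuous (fun z => U1 x y z) := by fun_prop
    have h2 : Continuous (fun z => V2 x y z) := by fun_prop
    have h3 : Continuous (fun z => W3 x y z) := by fun_prop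
    have h12 : Continuous (fun z => U1 x y z + V2 x y z) := h1.add h2
    rw [intervalIntegral.integral_add (h12.intervalIntegrable _ _)
      (h3.intervalIntegrable _ _), intervalIntegral.integral_add (h1.intervalIntegrable _ _)
      (h2.intervalIntegrable _ _)]
  rw [← E1, ← E2]
  have key := ww_int2_add
    (fun x y => W x y (e x y) - U x y (e x y) * e1 x y - V x y (e x y) * e2 x y)
    (fun x y => ((∫ z in (-h)..(e x y), U1 x y z) + U x y (e x y) * e1 x y)
      + ((∫ z in (-h)..(e x y), V2 x y z) + V x y (e x y) * e2 x y)) 0 L₁ 0 L₂ (by fun_prop)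
      ((hc1.add (by fun_prop)).add (hc2.add (by fun_prop)))
  have key2 := ww_int2_add
    (fun x y => ((∫ z in (-h)..(e x y), U1 x y z) + U x y (e x y) * e1 x y))
    (fun x y => ((∫ z in (-h)..(e x y), V2 x y z) + V x y (e x y) * e2 x y)) 0 L₁ 0 L₂
      (hc1.add (by fun_prop)) (hc2.add (by fun_prop))
  have key3 := ww_int2_add
    (fun x y => ∫ z in (-h)..(e x y), (U1 x y z + V2 x y z + W3 x y z))
    (fun x y => W x y (-h)) 0 L₁ 0 L₂
      (cI (fun x y z => U1 x y z + V2 x y z + W3 x y z) (by fun_prop)) (by fun_prop)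
  have key4 : (fun x y => (W x y (e x y) - U x y (e x y) * e1 x y - V x y (e x y) * e2 x y) +
      (((∫ z in (-h)..(e x y), U1 x y z) + U x y (e x y) * e1 x y)
      + ((∫ z in (-h)..(e x y), V2 x y z) + V x y (e x y) * e2 x y)))
      = fun x y => (∫ z in (-h)..(e x y), (U1 x y z + V2 x y z + W3 x y z)) + W x y (-h) := by
    funext x y
    rw [E4, E3]; ring
  have key5 := congrArg (fun F : ℝ → ℝ → ℝ => ∫ x in (0:ℝ)..L₁, ∫ y in (0:ℝ)..L₂, F x y) key4
  linarith

/-! ### partial derivatives -/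

def WS3 (f : ℝ → ℝ → ℝ → ℝ) : Prop :=
  ContDiff ℝ (⊤ : ℕ∞) (fun p : ℝ × ℝ × ℝ => f p.1 p.2.1 p.2.2)

def WS4 (f : ℝ → ℝ → ℝ → ℝ → ℝ) : Prop :=
  ContDiff ℝ (⊤ : ℕ∞) (fun p : ℝ × ℝ × ℝ × ℝ => f p.1 p.2.1 p.2.2.1 p.2.2.2)

lemma WS3.cont {f : ℝ → ℝ → ℝ → ℝ} (hf : WS3 f) :
    Continuous (fun p : ℝ × ℝ × ℝ => f p.1 p.2.1 p.2.2) := ContDiff.continuous hf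

lemma WS4.cont {f : ℝ → ℝ → ℝ → ℝ → ℝ} (hf : WS4 f) :
    Continuous (fun p : ℝ × ℝ × ℝ × ℝ => f p.1 p.2.1 p.2.2.1 p.2.2.2) := ContDiff.continuous hf

lemma ww_fd_smooth {E : Type*} [NormedAddCommGroup E] [NormedSpace ℝ E] (F : E → ℝ)
    (hF : ContDiff ℝ (⊤ : ℕ∞) F) (v : E) : ContDiff ℝ (⊤ : ℕ∞) (fun p => fderiv ℝ F p v) := by
  have : ContDiff ℝ (⊤ : ℕ∞) (fderiv ℝ F) := hF.fderiv_right (by simp)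
  exact this.clm_apply contDiff_const

lemma ww_fd_symm {E : Type*} [NormedAddCommGroup E] [NormedSpace ℝ E] (F : E → ℝ)
    (hF : ContDiff ℝ (⊤ : ℕ∞) F) (v w p : E) :
    fderiv ℝ (fun p => fderiv ℝ F p v) p w = fderiv ℝ (fun p => fderiv ℝ F p w) p v := by
  have h1 : ContDiff ℝ (⊤ : ℕ∞) (fderiv ℝ F) := hF.fderiv_right (by simp)
  have h2 : DifferentiableAt ℝ (fderiv ℝ F) p := (h1.differentiable (by simp)) p
  have e : ∀ v w : E, fderiv ℝ (fun p => fderiv ℝ F p v) p w = fderiv ℝ (fderiv ℝ F) p w v := by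
    intro v w
    rw [fderiv_clm_apply h2 (differentiableAt_const _)]
    simp
  rw [e, e]
  have := hF.contDiffAt (x := p) |>.isSymmSndFDerivAt
    (by simp only [minSmoothness_of_isRCLikeNormedField]; exact WithTop.coe_le_coe.2 (le_top : (2 : ℕ∞) ≤ ⊤))
  exact this w v

section
variable {f : ℝ → ℝ → ℝ → ℝ}

lemma WS3.fd (hf : WS3 f) (p : ℝ × ℝ × ℝ) :
    HasFDerivAt (fun p : ℝ × ℝ × ℝ => f p.1 p.2.1 p.2.2)
      (fderiv ℝ (fun p : ℝ × ℝ × ℝ => f p.1 p.2.1 p.2.2) p) p :=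
  ((ContDiff.differentiable hf (by simp)) p).hasFDerivAt

lemma WS3.dT_aux (hf : WS3 f) (t x y : ℝ) : HasDerivAt (fun s => f s x y)
    (fderiv ℝ (fun p : ℝ × ℝ × ℝ => f p.1 p.2.1 p.2.2) (t, x, y) (1, 0, 0)) t :=
  (hf.fd (t, x, y)).comp_hasDerivAt t (f := fun s => ((s, x, y) : ℝ × ℝ × ℝ))
    ((hasDerivAt_id t).prodMk (hasDerivAt_const t (x, y)))

lemma WS3.d1_aux (hf : WS3 f) (t x y : ℝ) : HasDerivAt (fun s => f t s y)
    (fderiv ℝ (fun p : ℝ × ℝ × ℝ => f p.1 p.2.1 p.2.2) (t, x, y) (0, 1, 0)) x :=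
  (hf.fd (t, x, y)).comp_hasDerivAt x (f := fun s => ((t, s, y) : ℝ × ℝ × ℝ))
    ((hasDerivAt_const x t).prodMk ((hasDerivAt_id x).prodMk (hasDerivAt_const x y)))

lemma WS3.d2_aux (hf : WS3 f) (t x y : ℝ) : HasDerivAt (fun s => f t x s)
    (fderiv ℝ (fun p : ℝ × ℝ × ℝ => f p.1 p.2.1 p.2.2) (t, x, y) (0, 0, 1)) y :=
  (hf.fd (t, x, y)).comp_hasDerivAt y (f := fun s => ((t, x, s) : ℝ × ℝ × ℝ))
    ((hasDerivAt_const y t).prodMk ((hasDerivAt_const y x).prodMk (hasDerivAt_id y)))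

lemma WS3.eT (hf : WS3 f) : (fun p : ℝ × ℝ × ℝ => etaT3 f p.1 p.2.1 p.2.2) =
    fun p => fderiv ℝ (fun p : ℝ × ℝ × ℝ => f p.1 p.2.1 p.2.2) p (1, 0, 0) :=
  funext fun p => (hf.dT_aux p.1 p.2.1 p.2.2).deriv
lemma WS3.e1 (hf : WS3 f) : (fun p : ℝ × ℝ × ℝ => etaX1 f p.1 p.2.1 p.2.2) =
    fun p => fderiv ℝ (fun p : ℝ × ℝ × ℝ => f p.1 p.2.1 p.2.2) p (0, 1, 0) :=
  funext fun p => (hf.d1_aux p.1 p.2.1 p.2.2).deriv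
lemma WS3.e2 (hf : WS3 f) : (fun p : ℝ × ℝ × ℝ => etaX2 f p.1 p.2.1 p.2.2) =
    fun p => fderiv ℝ (fun p : ℝ × ℝ × ℝ => f p.1 p.2.1 p.2.2) p (0, 0, 1) :=
  funext fun p => (hf.d2_aux p.1 p.2.1 p.2.2).deriv

lemma WS3.sT (hf : WS3 f) : WS3 (etaT3 f) := by
  unfold WS3; rw [hf.eT]; exact ww_fd_smooth _ hf _
lemma WS3.s1 (hf : WS3 f) : WS3 (etaX1 f) := by
  unfold WS3; rw [hf.e1]; exact ww_fd_smooth _ hf _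
lemma WS3.s2 (hf : WS3 f) : WS3 (etaX2 f) := by
  unfold WS3; rw [hf.e2]; exact ww_fd_smooth _ hf _

lemma WS3.dT (hf : WS3 f) (t x y : ℝ) : HasDerivAt (fun s => f s x y) (etaT3 f t x y) t :=
  (hf.dT_aux t x y).differentiableAt.hasDerivAt
lemma WS3.d1 (hf : WS3 f) (t x y : ℝ) : HasDerivAt (fun s => f t s y) (etaX1 f t x y) x :=
  (hf.d1_aux t x y).differentiableAt.hasDerivAt
lemma WS3.d2 (hf : WS3 f) (t x y : ℝ) : HasDerivAt (fun s => f t x s) (etaX2 f t x y) y :=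
  (hf.d2_aux t x y).differentiableAt.hasDerivAt

lemma WS3.symT1 (hf : WS3 f) (t x y : ℝ) : etaT3 (etaX1 f) t x y = etaX1 (etaT3 f) t x y := by
  have h1 := congrFun hf.s1.eT (t, x, y)
  have h2 := congrFun hf.sT.e1 (t, x, y)
  rw [hf.e1] at h1
  rw [hf.eT] at h2
  exact h1.trans ((ww_fd_symm _ hf _ _ _).trans h2.symm)
lemma WS3.symT2 (hf : WS3 f) (t x y : ℝ) : etaT3 (etaX2 f) t x y = etaX2 (etaT3 f) t x y := by
  have h1 := congrFun hf.s2.eT (t, x, y)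
  have h2 := congrFun hf.sT.e2 (t, x, y)
  rw [hf.e2] at h1
  rw [hf.eT] at h2
  exact h1.trans ((ww_fd_symm _ hf _ _ _).trans h2.symm)
end

section
variable {f : ℝ → ℝ → ℝ → ℝ → ℝ}

lemma WS4.fd (hf : WS4 f) (p : ℝ × ℝ × ℝ × ℝ) :
    HasFDerivAt (fun p : ℝ × ℝ × ℝ × ℝ => f p.1 p.2.1 p.2.2.1 p.2.2.2)
      (fderiv ℝ (fun p : ℝ × ℝ × ℝ × ℝ => f p.1 p.2.1 p.2.2.1 p.2.2.2) p) p :=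
  ((ContDiff.differentiable hf (by simp)) p).hasFDerivAt

lemma WS4.dT_aux (hf : WS4 f) (t x y z : ℝ) : HasDerivAt (fun s => f s x y z)
    (fderiv ℝ (fun p : ℝ × ℝ × ℝ × ℝ => f p.1 p.2.1 p.2.2.1 p.2.2.2) (t, x, y, z) (1, 0, 0, 0)) t :=
  (hf.fd (t, x, y, z)).comp_hasDerivAt t (f := fun s => ((s, x, y, z) : ℝ × ℝ × ℝ × ℝ))
    ((hasDerivAt_id t).prodMk (hasDerivAt_const t (x, y, z)))

lemma WS4.d1_aux (hf : WS4 f) (t x y z : ℝ) : HasDerivAt (fun s => f t s y z)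
    (fderiv ℝ (fun p : ℝ × ℝ × ℝ × ℝ => f p.1 p.2.1 p.2.2.1 p.2.2.2) (t, x, y, z) (0, 1, 0, 0)) x :=
  (hf.fd (t, x, y, z)).comp_hasDerivAt x (f := fun s => ((t, s, y, z) : ℝ × ℝ × ℝ × ℝ))
    ((hasDerivAt_const x t).prodMk ((hasDerivAt_id x).prodMk (hasDerivAt_const x (y, z))))

lemma WS4.d2_aux (hf : WS4 f) (t x y z : ℝ) : HasDerivAt (fun s => f t x s z)
    (fderiv ℝ (fun p : ℝ × ℝ × ℝ × ℝ => f p.1 p.2.1 p.2.2.1 p.2.2.2) (t, x, y, z) (0, 0, 1, 0)) y :=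
  (hf.fd (t, x, y, z)).comp_hasDerivAt y (f := fun s => ((t, x, s, z) : ℝ × ℝ × ℝ × ℝ))
    ((hasDerivAt_const y t).prodMk ((hasDerivAt_const y x).prodMk
      ((hasDerivAt_id y).prodMk (hasDerivAt_const y z))))

lemma WS4.d3_aux (hf : WS4 f) (t x y z : ℝ) : HasDerivAt (fun s => f t x y s)
    (fderiv ℝ (fun p : ℝ × ℝ × ℝ × ℝ => f p.1 p.2.1 p.2.2.1 p.2.2.2) (t, x, y, z) (0, 0, 0, 1)) z :=
  (hf.fd (t, x, y, z)).comp_hasDerivAt z (f := fun s => ((t, x, y, s) : ℝ × ℝ × ℝ × ℝ))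
    ((hasDerivAt_const z t).prodMk ((hasDerivAt_const z x).prodMk
      ((hasDerivAt_const z y).prodMk (hasDerivAt_id z))))

lemma WS4.eT (hf : WS4 f) : (fun p : ℝ × ℝ × ℝ × ℝ => phiT3 f p.1 p.2.1 p.2.2.1 p.2.2.2) =
    fun p => fderiv ℝ (fun p : ℝ × ℝ × ℝ × ℝ => f p.1 p.2.1 p.2.2.1 p.2.2.2) p (1, 0, 0, 0) :=
  funext fun p => (hf.dT_aux p.1 p.2.1 p.2.2.1 p.2.2.2).deriv
lemma WS4.e1 (hf : WS4 f) : (fun p : ℝ × ℝ × ℝ × ℝ => phiX1 f p.1 p.2.1 p.2.2.1 p.2.2.2) =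
    fun p => fderiv ℝ (fun p : ℝ × ℝ × ℝ × ℝ => f p.1 p.2.1 p.2.2.1 p.2.2.2) p (0, 1, 0, 0) :=
  funext fun p => (hf.d1_aux p.1 p.2.1 p.2.2.1 p.2.2.2).deriv
lemma WS4.e2 (hf : WS4 f) : (fun p : ℝ × ℝ × ℝ × ℝ => phiX2 f p.1 p.2.1 p.2.2.1 p.2.2.2) =
    fun p => fderiv ℝ (fun p : ℝ × ℝ × ℝ × ℝ => f p.1 p.2.1 p.2.2.1 p.2.2.2) p (0, 0, 1, 0) :=
  funext fun p => (hf.d2_aux p.1 p.2.1 p.2.2.1 p.2.2.2).deriv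
lemma WS4.e3 (hf : WS4 f) : (fun p : ℝ × ℝ × ℝ × ℝ => phiY3 f p.1 p.2.1 p.2.2.1 p.2.2.2) =
    fun p => fderiv ℝ (fun p : ℝ × ℝ × ℝ × ℝ => f p.1 p.2.1 p.2.2.1 p.2.2.2) p (0, 0, 0, 1) :=
  funext fun p => (hf.d3_aux p.1 p.2.1 p.2.2.1 p.2.2.2).deriv

lemma WS4.sT (hf : WS4 f) : WS4 (phiT3 f) := by
  unfold WS4; rw [hf.eT]; exact ww_fd_smooth _ hf _
lemma WS4.s1 (hf : WS4 f) : WS4 (phiX1 f) := by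
  unfold WS4; rw [hf.e1]; exact ww_fd_smooth _ hf _
lemma WS4.s2 (hf : WS4 f) : WS4 (phiX2 f) := by
  unfold WS4; rw [hf.e2]; exact ww_fd_smooth _ hf _
lemma WS4.s3 (hf : WS4 f) : WS4 (phiY3 f) := by
  unfold WS4; rw [hf.e3]; exact ww_fd_smooth _ hf _

lemma WS4.dT (hf : WS4 f) (t x y z : ℝ) : HasDerivAt (fun s => f s x y z) (phiT3 f t x y z) t :=
  (hf.dT_aux t x y z).differentiableAt.hasDerivAt
lemma WS4.d1 (hf : WS4 f) (t x y z : ℝ) : HasDerivAt (fun s => f t s y z) (phiX1 f t x y z) x :=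
  (hf.d1_aux t x y z).differentiableAt.hasDerivAt
lemma WS4.d2 (hf : WS4 f) (t x y z : ℝ) : HasDerivAt (fun s => f t x s z) (phiX2 f t x y z) y :=
  (hf.d2_aux t x y z).differentiableAt.hasDerivAt
lemma WS4.d3 (hf : WS4 f) (t x y z : ℝ) : HasDerivAt (fun s => f t x y s) (phiY3 f t x y z) z :=
  (hf.d3_aux t x y z).differentiableAt.hasDerivAt

lemma WS4.symT1 (hf : WS4 f) (t x y z : ℝ) :
    phiT3 (phiX1 f) t x y z = phiX1 (phiT3 f) t x y z := by
  have h1 := congrFun hf.s1.eT (t, x, y, z)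
  have h2 := congrFun hf.sT.e1 (t, x, y, z)
  rw [hf.e1] at h1
  rw [hf.eT] at h2
  exact h1.trans ((ww_fd_symm _ hf _ _ _).trans h2.symm)
lemma WS4.symT2 (hf : WS4 f) (t x y z : ℝ) :
    phiT3 (phiX2 f) t x y z = phiX2 (phiT3 f) t x y z := by
  have h1 := congrFun hf.s2.eT (t, x, y, z)
  have h2 := congrFun hf.sT.e2 (t, x, y, z)
  rw [hf.e2] at h1
  rw [hf.eT] at h2
  exact h1.trans ((ww_fd_symm _ hf _ _ _).trans h2.symm)
lemma WS4.symT3 (hf : WS4 f) (t x y z : ℝ) :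
    phiT3 (phiY3 f) t x y z = phiY3 (phiT3 f) t x y z := by
  have h1 := congrFun hf.s3.eT (t, x, y, z)
  have h2 := congrFun hf.sT.e3 (t, x, y, z)
  rw [hf.e3] at h1
  rw [hf.eT] at h2
  exact h1.trans ((ww_fd_symm _ hf _ _ _).trans h2.symm)
lemma WS4.sym21 (hf : WS4 f) (t x y z : ℝ) :
    phiX2 (phiX1 f) t x y z = phiX1 (phiX2 f) t x y z := by
  have h1 := congrFun hf.s1.e2 (t, x, y, z)
  have h2 := congrFun hf.s2.e1 (t, x, y, z)
  rw [hf.e1] at h1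
  rw [hf.e2] at h2
  exact h1.trans ((ww_fd_symm _ hf _ _ _).trans h2.symm)
lemma WS4.sym31 (hf : WS4 f) (t x y z : ℝ) :
    phiY3 (phiX1 f) t x y z = phiX1 (phiY3 f) t x y z := by
  have h1 := congrFun hf.s1.e3 (t, x, y, z)
  have h2 := congrFun hf.s3.e1 (t, x, y, z)
  rw [hf.e1] at h1
  rw [hf.e3] at h2
  exact h1.trans ((ww_fd_symm _ hf _ _ _).trans h2.symm)
lemma WS4.sym32 (hf : WS4 f) (t x y z : ℝ) :
    phiY3 (phiX2 f) t x y z = phiX2 (phiY3 f) t x y z := by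
  have h1 := congrFun hf.s2.e3 (t, x, y, z)
  have h2 := congrFun hf.s3.e2 (t, x, y, z)
  rw [hf.e2] at h1
  rw [hf.e3] at h2
  exact h1.trans ((ww_fd_symm _ hf _ _ _).trans h2.symm)
end

section
variable {η : ℝ → ℝ → ℝ → ℝ} {ϕ : ℝ → ℝ → ℝ → ℝ → ℝ}

lemma ww_psi_s (he : WS3 η) (hp : WS4 ϕ) : WS3 (psi3 η ϕ) := by
  unfold WS3 WS4 psi3 at *
  exact hp.comp (g := fun p : ℝ × ℝ × ℝ × ℝ => ϕ p.1 p.2.1 p.2.2.1 p.2.2.2)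
    (f := fun p : ℝ × ℝ × ℝ => (p.1, p.2.1, p.2.2, η p.1 p.2.1 p.2.2)) (by fun_prop)

lemma ww_psi_T (he : WS3 η) (hp : WS4 ϕ) (t x y : ℝ) : etaT3 (psi3 η ϕ) t x y =
    phiT3 ϕ t x y (η t x y) + phiY3 ϕ t x y (η t x y) * etaT3 η t x y := by
  have h := (hp.fd (t, x, y, η t x y)).comp_hasDerivAt t
    (f := fun s => ((s, x, y, η s x y) : ℝ × ℝ × ℝ × ℝ))
    ((hasDerivAt_id t).prodMk ((hasDerivAt_const t x).prodMk
      ((hasDerivAt_const t y).prodMk (he.dT t x y))))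
  have h1 := congrFun hp.eT (t, x, y, η t x y)
  have h2 := congrFun hp.e3 (t, x, y, η t x y)
  refine h.deriv.trans ?_
  simp only at h1 h2
  rw [h1, h2, mul_comm, ← smul_eq_mul, ← map_smul, ← map_add]
  simp

lemma ww_psi_1 (he : WS3 η) (hp : WS4 ϕ) (t x y : ℝ) : etaX1 (psi3 η ϕ) t x y =
    phiX1 ϕ t x y (η t x y) + phiY3 ϕ t x y (η t x y) * etaX1 η t x y := by
  have h := (hp.fd (t, x, y, η t x y)).comp_hasDerivAt x
    (f := fun s => ((t, s, y, η t s y) : ℝ × ℝ × ℝ × ℝ))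
    ((hasDerivAt_const x t).prodMk ((hasDerivAt_id x).prodMk
      ((hasDerivAt_const x y).prodMk (he.d1 t x y))))
  have h1 := congrFun hp.e1 (t, x, y, η t x y)
  have h2 := congrFun hp.e3 (t, x, y, η t x y)
  refine h.deriv.trans ?_
  simp only at h1 h2
  rw [h1, h2, mul_comm, ← smul_eq_mul, ← map_smul, ← map_add]
  simp

lemma ww_psi_2 (he : WS3 η) (hp : WS4 ϕ) (t x y : ℝ) : etaX2 (psi3 η ϕ) t x y =
    phiX2 ϕ t x y (η t x y) + phiY3 ϕ t x y (η t x y) * etaX2 η t x y := by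
  have h := (hp.fd (t, x, y, η t x y)).comp_hasDerivAt y
    (f := fun s => ((t, x, s, η t x s) : ℝ × ℝ × ℝ × ℝ))
    ((hasDerivAt_const y t).prodMk ((hasDerivAt_const y x).prodMk
      ((hasDerivAt_id y).prodMk (he.d2 t x y))))
  have h1 := congrFun hp.e2 (t, x, y, η t x y)
  have h2 := congrFun hp.e3 (t, x, y, η t x y)
  refine h.deriv.trans ?_
  simp only at h1 h2
  rw [h1, h2, mul_comm, ← smul_eq_mul, ← map_smul, ← map_add]
  simp
end

/-! ### Poincaré inequality -/

lemma ww_cs (f : ℝ → ℝ) (hf : Continuous f) (a b : ℝ) (hab : a ≤ b) :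
    (∫ x in a..b, f x) ^ 2 ≤ (b - a) * ∫ x in a..b, f x ^ 2 := by
  rcases hab.eq_or_lt with rfl | hlt
  · simp
  set I := ∫ x in a..b, f x with hI
  have h0 : 0 ≤ ∫ x in a..b, ((b - a) * f x - I) ^ 2 :=
    intervalIntegral.integral_nonneg hab (fun x _ => sq_nonneg _)
  have e : ∫ x in a..b, ((b - a) * f x - I) ^ 2
      = (b - a) ^ 2 * (∫ x in a..b, f x ^ 2) - 2 * (b - a) * I * I + (b - a) * I ^ 2 := by
    have e1 : (fun x => ((b - a) * f x - I) ^ 2)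
        = fun x => ((b - a) ^ 2 * f x ^ 2 - 2 * (b - a) * I * f x) + I ^ 2 := by
      funext x; ring
    rw [e1, intervalIntegral.integral_add (Continuous.intervalIntegrable (by fun_prop) _ _)
      (Continuous.intervalIntegrable (by fun_prop) _ _),
      intervalIntegral.integral_sub (Continuous.intervalIntegrable (by fun_prop) _ _)
      (Continuous.intervalIntegrable (by fun_prop) _ _), intervalIntegral.integral_const_mul,
      intervalIntegral.integral_const_mul, intervalIntegral.integral_const, ← hI]
    simp
  rw [e] at h0
  have h1 : 0 ≤ (b - a) * ((b - a) * (∫ x in a..b, f x ^ 2) - I ^ 2) := by nlinarith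
  have h2 := nonneg_of_mul_nonneg_right h1 (by linarith : 0 < b - a)
  linarith

lemma ww_half (f f' : ℝ → ℝ) (hf' : Continuous f')
    (hd : ∀ x, HasDerivAt f (f' x) x) (a b : ℝ) (hab : a ≤ b) :
    ∫ x in a..b, (f x - f b) ^ 2 ≤ (b - a) ^ 2 / 2 * ∫ x in a..b, f' x ^ 2 := by
  have hfc : Continuous f := continuous_iff_continuousAt.2 fun x => (hd x).continuousAt
  have h1 : ∀ x ∈ Icc a b, (f x - f b) ^ 2 ≤ (b - x) * ∫ x in a..b, f' x ^ 2 := by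
    intro x hx
    have e : ∫ u in x..b, f' u = f b - f x :=
      intervalIntegral.integral_eq_sub_of_hasDerivAt (fun u _ => hd u) (hf'.intervalIntegrable _ _)
    have h2 := ww_cs f' hf' x b hx.2
    have h3 : ∫ u in x..b, f' u ^ 2 ≤ ∫ u in a..b, f' u ^ 2 := by
      rw [← intervalIntegral.integral_add_adjacent_intervals (a := a) (b := x) (c := b)
        (Continuous.intervalIntegrable (by fun_prop) _ _)
        (Continuous.intervalIntegrable (by fun_prop) _ _)]
      have : 0 ≤ ∫ u in a..x, f' u ^ 2 :=
        intervalIntegral.integral_nonneg hx.1 (fun x _ => sq_nonneg _)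
      linarith
    rw [e] at h2
    calc (f x - f b) ^ 2 = (f b - f x) ^ 2 := by ring
      _ ≤ _ := h2
      _ ≤ _ := mul_le_mul_of_nonneg_left h3 (by linarith [hx.2])
  have h4 := intervalIntegral.integral_mono_on (μ := volume) hab
    (Continuous.intervalIntegrable (by fun_prop) _ _)
    (Continuous.intervalIntegrable (by fun_prop) _ _) h1
  refine h4.trans_eq ?_
  rw [intervalIntegral.integral_mul_const]
  congr 1
  rw [intervalIntegral.integral_sub (Continuous.intervalIntegrable (by fun_prop) _ _)
    (Continuous.intervalIntegrable (by fun_prop) _ _), intervalIntegral.integral_const, integral_id]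
  simp only [smul_eq_mul]; ring

lemma ww_half' (f f' : ℝ → ℝ) (hf' : Continuous f')
    (hd : ∀ x, HasDerivAt f (f' x) x) (a b : ℝ) (hab : a ≤ b) :
    ∫ x in a..b, (f x - f a) ^ 2 ≤ (b - a) ^ 2 / 2 * ∫ x in a..b, f' x ^ 2 := by
  have h := ww_half (fun x => f (-x)) (fun x => - f' (-x)) (by fun_prop)
    (fun x => by
      have := (hd (-x)).comp x (hasDerivAt_neg x)
      rw [mul_neg_one] at this
      exact this) (-b) (-a) (by linarith)
  have e1 := intervalIntegral.integral_comp_neg (fun x => (f x - f a) ^ 2) (a := -b) (b := -a)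
  have e2 := intervalIntegral.integral_comp_neg (fun x => f' x ^ 2) (a := -b) (b := -a)
  simp only [neg_neg, even_two, Even.neg_pow] at h e1 e2
  rw [e1, e2] at h
  convert h using 2
  ring

lemma ww_mid (f f' : ℝ → ℝ) (hf' : Continuous f')
    (hd : ∀ x, HasDerivAt f (f' x) x) (L : ℝ) (hL : 0 < L) :
    ∫ x in (0:ℝ)..L, (f x - f (L / 2)) ^ 2 ≤ L ^ 2 / 8 * ∫ x in (0:ℝ)..L, f' x ^ 2 := by
  have hfc : Continuous f := continuous_iff_continuousAt.2 fun x => (hd x).continuousAt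
  have h1 := ww_half f f' hf' hd 0 (L / 2) (by linarith)
  have h2 := ww_half' f f' hf' hd (L / 2) L (by linarith)
  rw [← intervalIntegral.integral_add_adjacent_intervals (a := 0) (b := L / 2) (c := L)
    (f := fun x => (f x - f (L / 2)) ^ 2)
        (Continuous.intervalIntegrable (by fun_prop) _ _)
        (Continuous.intervalIntegrable (by fun_prop) _ _),
    ← intervalIntegral.integral_add_adjacent_intervals (a := 0) (b := L / 2) (c := L)
    (f := fun x => f' x ^ 2)
        (Continuous.intervalIntegrable (by fun_prop) _ _)
        (Continuous.intervalIntegrable (by fun_prop) _ _)]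
  nlinarith

lemma ww_var (f f' : ℝ → ℝ) (hf' : Continuous f')
    (hd : ∀ x, HasDerivAt f (f' x) x) (L k : ℝ) (hL : 0 < L) :
    ∫ x in (0:ℝ)..L, (f x - k) ^ 2 ≤ L ^ 2 / 8 * (∫ x in (0:ℝ)..L, f' x ^ 2)
      + 1 / L * ((∫ x in (0:ℝ)..L, f x) - L * k) ^ 2 := by
  have hfc : Continuous f := continuous_iff_continuousAt.2 fun x => (hd x).continuousAt
  have h1 := ww_mid f f' hf' hd L hL
  set q := f (L / 2)
  have e : ∫ x in (0:ℝ)..L, (f x - k) ^ 2 = (∫ x in (0:ℝ)..L, (f x - q) ^ 2)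
      + (2 * (q - k) * ((∫ x in (0:ℝ)..L, f x) - L * q) + L * (q - k) ^ 2) := by
    have e1 : (fun x => (f x - k) ^ 2)
        = fun x => ((f x - q) ^ 2 + 2 * (q - k) * f x) + ((q - k) ^ 2 - 2 * (q - k) * q) := by
      funext x; ring
    rw [e1, intervalIntegral.integral_add (Continuous.intervalIntegrable (by fun_prop) _ _)
      (Continuous.intervalIntegrable (by fun_prop) _ _),
      intervalIntegral.integral_add (Continuous.intervalIntegrable (by fun_prop) _ _)
      (Continuous.intervalIntegrable (by fun_prop) _ _), intervalIntegral.integral_const_mul,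
      intervalIntegral.integral_const]
    simp only [smul_eq_mul]; ring
  rw [e]
  set m := ∫ x in (0:ℝ)..L, f x
  have h2 : 0 ≤ 1 / L * (m - L * q) ^ 2 := by positivity
  have h3 : 1 / L * (m - L * k) ^ 2 = 1 / L * (m - L * q) ^ 2
      + (2 * (q - k) * (m - L * q) + L * (q - k) ^ 2) := by
    field_simp; ring
  linarith

lemma ww_poincare (u u1 u2 : ℝ → ℝ → ℝ) (L₁ L₂ : ℝ) (hL₁ : 0 < L₁) (hL₂ : 0 < L₂)
    (hu : Continuous (fun p : ℝ × ℝ => u p.1 p.2))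
    (hu1 : Continuous (fun p : ℝ × ℝ => u1 p.1 p.2))
    (hu2 : Continuous (fun p : ℝ × ℝ => u2 p.1 p.2))
    (du1 : ∀ x y, HasDerivAt (fun s => u s y) (u1 x y) x)
    (du2 : ∀ x y, HasDerivAt (fun s => u x s) (u2 x y) y) :
    ∃ k : ℝ, ∫ x in (0:ℝ)..L₁, ∫ y in (0:ℝ)..L₂, (u x y - k) ^ 2 ≤
      (max L₁ L₂) ^ 2 / 8 * ∫ x in (0:ℝ)..L₁, ∫ y in (0:ℝ)..L₂, ((u1 x y) ^ 2 + (u2 x y) ^ 2) := by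
  set m : ℝ → ℝ := fun x => ∫ y in (0:ℝ)..L₂, u x y with hm
  set m' : ℝ → ℝ := fun x => ∫ y in (0:ℝ)..L₂, u1 x y with hm'
  have hmd : ∀ x, HasDerivAt m (m' x) x := fun x => ww_deriv_param u u1 0 L₂ x hu hu1 du1
  have hmc : Continuous m' := ww_cont1 u1 hu1 0 L₂
  have hmcc : Continuous m := ww_cont1 u hu 0 L₂
  have hs1 : Continuous (fun x => ∫ y in (0:ℝ)..L₂, (u1 x y) ^ 2) :=
    ww_cont1 (fun x y => (u1 x y) ^ 2) (by fun_prop) 0 L₂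
  have hs2 : Continuous (fun x => ∫ y in (0:ℝ)..L₂, (u2 x y) ^ 2) :=
    ww_cont1 (fun x y => (u2 x y) ^ 2) (by fun_prop) 0 L₂
  refine ⟨m (L₁ / 2) / L₂, ?_⟩
  set k := m (L₁ / 2) / L₂ with hk
  have hk2 : L₂ * k = m (L₁ / 2) := by rw [hk]; field_simp
  have h1 : ∫ x in (0:ℝ)..L₁, ∫ y in (0:ℝ)..L₂, (u x y - k) ^ 2 ≤
      ∫ x in (0:ℝ)..L₁, (L₂ ^ 2 / 8 * (∫ y in (0:ℝ)..L₂, (u2 x y) ^ 2)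
        + 1 / L₂ * (m x - m (L₁ / 2)) ^ 2) := by
    apply intervalIntegral.integral_mono_on hL₁.le
    · exact (ww_cont1 (fun x y => (u x y - k) ^ 2) (by fun_prop) 0 L₂).intervalIntegrable _ _
    · exact Continuous.intervalIntegrable (by fun_prop) _ _
    · intro x _
      have := ww_var (fun y => u x y) (fun y => u2 x y) (by fun_prop) (du2 x) L₂ k hL₂
      rw [hk2] at this
      exact this
  rw [intervalIntegral.integral_add (Continuous.intervalIntegrable (by fun_prop) _ _)
    (Continuous.intervalIntegrable (by fun_prop) _ _), intervalIntegral.integral_const_mul,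
    intervalIntegral.integral_const_mul] at h1
  have h2 := ww_mid m m' hmc hmd L₁ hL₁
  have h3 : ∫ x in (0:ℝ)..L₁, m' x ^ 2 ≤ ∫ x in (0:ℝ)..L₁, L₂ * ∫ y in (0:ℝ)..L₂, (u1 x y) ^ 2 := by
    apply intervalIntegral.integral_mono_on hL₁.le (Continuous.intervalIntegrable (by fun_prop) _ _)
      (Continuous.intervalIntegrable (by fun_prop) _ _)
    intro x _
    have := ww_cs (fun y => u1 x y) (by fun_prop) 0 L₂ hL₂.le
    simpa using this
  rw [intervalIntegral.integral_const_mul] at h3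
  rw [ww_int2_add (fun x y => (u1 x y) ^ 2) (fun x y => (u2 x y) ^ 2) 0 L₁ 0 L₂
    (by fun_prop) (by fun_prop)]
  set S1 := ∫ x in (0:ℝ)..L₁, ∫ y in (0:ℝ)..L₂, (u1 x y) ^ 2
  set S2 := ∫ x in (0:ℝ)..L₁, ∫ y in (0:ℝ)..L₂, (u2 x y) ^ 2
  have hS1 : 0 ≤ S1 := intervalIntegral.integral_nonneg hL₁.le fun x _ =>
    intervalIntegral.integral_nonneg hL₂.le fun y _ => sq_nonneg _
  have hS2 : 0 ≤ S2 := intervalIntegral.integral_nonneg hL₁.le fun x _ =>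
    intervalIntegral.integral_nonneg hL₂.le fun y _ => sq_nonneg _
  have h4 : 1 / L₂ * ∫ x in (0:ℝ)..L₁, (m x - m (L₁ / 2)) ^ 2 ≤ L₁ ^ 2 / 8 * S1 := by
    calc 1 / L₂ * ∫ x in (0:ℝ)..L₁, (m x - m (L₁ / 2)) ^ 2
        ≤ 1 / L₂ * (L₁ ^ 2 / 8 * (L₂ * S1)) := by
          apply mul_le_mul_of_nonneg_left _ (by positivity)
          exact h2.trans (mul_le_mul_of_nonneg_left h3 (by positivity))
      _ = _ := by field_simp
  have h5 : L₁ ^ 2 ≤ (max L₁ L₂) ^ 2 := by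
    apply pow_le_pow_left₀ hL₁.le (le_max_left _ _)
  have h6 : L₂ ^ 2 ≤ (max L₁ L₂) ^ 2 := by
    apply pow_le_pow_left₀ hL₂.le (le_max_right _ _)
  nlinarith [mul_le_mul_of_nonneg_right h5 hS1, mul_le_mul_of_nonneg_right h6 hS2]

/-! ### identities at a fixed time -/

structure WStatic (L₁ L₂ h : ℝ) (e e1 e2 et : ℝ → ℝ → ℝ)
    (p1 p2 p3 p11 p12 p13 p22 p23 p33 : ℝ → ℝ → ℝ → ℝ) : Prop where
  hL₁ : 0 < L₁
  hL₂ : 0 < L₂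
  ce : Continuous (fun p : ℝ × ℝ => e p.1 p.2)
  ce1 : Continuous (fun p : ℝ × ℝ => e1 p.1 p.2)
  ce2 : Continuous (fun p : ℝ × ℝ => e2 p.1 p.2)
  cet : Continuous (fun p : ℝ × ℝ => et p.1 p.2)
  de1 : ∀ x y, HasDerivAt (fun u => e u y) (e1 x y) x
  de2 : ∀ x y, HasDerivAt (fun u => e x u) (e2 x y) y
  c1 : Continuous (fun p : ℝ × ℝ × ℝ => p1 p.1 p.2.1 p.2.2)
  c2 : Continuous (fun p : ℝ × ℝ × ℝ => p2 p.1 p.2.1 p.2.2)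
  c3 : Continuous (fun p : ℝ × ℝ × ℝ => p3 p.1 p.2.1 p.2.2)
  c11 : Continuous (fun p : ℝ × ℝ × ℝ => p11 p.1 p.2.1 p.2.2)
  c12 : Continuous (fun p : ℝ × ℝ × ℝ => p12 p.1 p.2.1 p.2.2)
  c13 : Continuous (fun p : ℝ × ℝ × ℝ => p13 p.1 p.2.1 p.2.2)
  c22 : Continuous (fun p : ℝ × ℝ × ℝ => p22 p.1 p.2.1 p.2.2)
  c23 : Continuous (fun p : ℝ × ℝ × ℝ => p23 p.1 p.2.1 p.2.2)
  c33 : Continuous (fun p : ℝ × ℝ × ℝ => p33 p.1 p.2.1 p.2.2)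
  d11 : ∀ x y z, HasDerivAt (fun u => p1 u y z) (p11 x y z) x
  d12 : ∀ x y z, HasDerivAt (fun u => p1 x u z) (p12 x y z) y
  d13 : ∀ x y z, HasDerivAt (fun u => p1 x y u) (p13 x y z) z
  d21 : ∀ x y z, HasDerivAt (fun u => p2 u y z) (p12 x y z) x
  d22 : ∀ x y z, HasDerivAt (fun u => p2 x u z) (p22 x y z) y
  d23 : ∀ x y z, HasDerivAt (fun u => p2 x y u) (p23 x y z) z
  d31 : ∀ x y z, HasDerivAt (fun u => p3 u y z) (p13 x y z) x
  d32 : ∀ x y z, HasDerivAt (fun u => p3 x u z) (p23 x y z) y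
  d33 : ∀ x y z, HasDerivAt (fun u => p3 x y u) (p33 x y z) z
  low : ∀ x ∈ Icc (0:ℝ) L₁, ∀ y ∈ Icc (0:ℝ) L₂, -h ≤ e x y
  lap : ∀ x ∈ Icc (0:ℝ) L₁, ∀ y ∈ Icc (0:ℝ) L₂, ∀ z ∈ Icc (-h) (e x y),
    p11 x y z + p22 x y z + p33 x y z = 0
  bc10 : ∀ y ∈ Icc (0:ℝ) L₂, ∀ z ∈ Icc (-h) (e 0 y), p1 0 y z = 0
  bc1L : ∀ y ∈ Icc (0:ℝ) L₂, ∀ z ∈ Icc (-h) (e L₁ y), p1 L₁ y z = 0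
  bc20 : ∀ x ∈ Icc (0:ℝ) L₁, ∀ z ∈ Icc (-h) (e x 0), p2 x 0 z = 0
  bc2L : ∀ x ∈ Icc (0:ℝ) L₁, ∀ z ∈ Icc (-h) (e x L₂), p2 x L₂ z = 0
  bc3 : ∀ x ∈ Icc (0:ℝ) L₁, ∀ y ∈ Icc (0:ℝ) L₂, p3 x y (-h) = 0
  kin : ∀ x ∈ Icc (0:ℝ) L₁, ∀ y ∈ Icc (0:ℝ) L₂,
    et x y = p3 x y (e x y) - (e1 x y * p1 x y (e x y) + e2 x y * p2 x y (e x y))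

lemma ww_int1_zero (f : ℝ → ℝ) (a b : ℝ) (hab : a ≤ b) (hf : ∀ x ∈ Icc a b, f x = 0) :
    ∫ x in a..b, f x = 0 := by
  rw [intervalIntegral.integral_congr (g := fun _ => (0:ℝ))]
  · simp
  · intro x hx
    rw [uIcc_of_le hab] at hx
    exact hf x hx

lemma ww_int1_nonpos (f : ℝ → ℝ) (a b : ℝ) (hab : a ≤ b) (hf : ∀ x ∈ Icc a b, f x ≤ 0) :
    ∫ x in a..b, f x ≤ 0 := by
  have := intervalIntegral.integral_nonneg (μ := volume) hab
    (f := fun x => - f x) (fun x hx => by linarith [hf x hx])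
  rw [intervalIntegral.integral_neg] at this
  linarith

lemma ww_cI (h : ℝ) (e : ℝ → ℝ → ℝ) (he : Continuous (fun p : ℝ × ℝ => e p.1 p.2))
    (F : ℝ → ℝ → ℝ → ℝ) (hF : Continuous (fun p : ℝ × ℝ × ℝ => F p.1 p.2.1 p.2.2)) :
    Continuous (fun p : ℝ × ℝ => ∫ z in (-h)..(e p.1 p.2), F p.1 p.2 z) := by
  apply intervalIntegral.continuous_parametric_intervalIntegral_of_continuous
  · simp only [Function.uncurry_def]; fun_prop
  · fun_prop

lemma ww_comb (k a b c d : ℝ) (h1 : k ≤ a) (h2 : 0 ≤ b) (h3 : c ≤ 0) (h4 : d ≤ 0) :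
    k ≤ a + b - c - d := by linarith

lemma ww_pw (a b p q r B : ℝ) (hB : 0 < B) (hs : a ^ 2 + b ^ 2 ≤ B ^ 2) :
    (a * p + b * q) * r ≤ B / 2 * (p ^ 2 + q ^ 2 + r ^ 2) := by
  have h1 : (a * p + b * q) ^ 2 ≤ B ^ 2 * (p ^ 2 + q ^ 2) := by
    have := mul_le_mul_of_nonneg_right hs (add_nonneg (sq_nonneg p) (sq_nonneg q))
    nlinarith [sq_nonneg (a * q - b * p)]
  have h2 : 0 ≤ ((a * p + b * q) - B * r) ^ 2 := sq_nonneg _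
  have h3 : B * ((a * p + b * q) * r) ≤ B * (B / 2 * (p ^ 2 + q ^ 2 + r ^ 2)) := by nlinarith
  exact le_of_mul_le_mul_left h3 hB

section
variable {L₁ L₂ h : ℝ} {e e1 e2 et : ℝ → ℝ → ℝ}
    {p1 p2 p3 p11 p12 p13 p22 p23 p33 : ℝ → ℝ → ℝ → ℝ}

lemma WStatic.flux (S : WStatic L₁ L₂ h e e1 e2 et p1 p2 p3 p11 p12 p13 p22 p23 p33)
    (F F1 F2 F3 : ℝ → ℝ → ℝ → ℝ)
    (cF : Continuous (fun p : ℝ × ℝ × ℝ => F p.1 p.2.1 p.2.2))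
    (cF1 : Continuous (fun p : ℝ × ℝ × ℝ => F1 p.1 p.2.1 p.2.2))
    (cF2 : Continuous (fun p : ℝ × ℝ × ℝ => F2 p.1 p.2.1 p.2.2))
    (cF3 : Continuous (fun p : ℝ × ℝ × ℝ => F3 p.1 p.2.1 p.2.2))
    (dF1 : ∀ x y z, HasDerivAt (fun u => F u y z) (F1 x y z) x)
    (dF2 : ∀ x y z, HasDerivAt (fun u => F x u z) (F2 x y z) y)
    (dF3 : ∀ x y z, HasDerivAt (fun u => F x y u) (F3 x y z) z) :
    ∫ x in (0:ℝ)..L₁, ∫ y in (0:ℝ)..L₂, F x y (e x y) * et x y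
      = ∫ x in (0:ℝ)..L₁, ∫ y in (0:ℝ)..L₂, ∫ z in (-h)..(e x y),
        (F1 x y z * p1 x y z + F2 x y z * p2 x y z + F3 x y z * p3 x y z) := by
  have c1 := S.c1
  have c2 := S.c2
  have c3 := S.c3
  have c11 := S.c11
  have c22 := S.c22
  have c33 := S.c33
  have l0 : (0:ℝ) ∈ Icc (0:ℝ) L₁ := ⟨le_rfl, S.hL₁.le⟩
  have l1 : L₁ ∈ Icc (0:ℝ) L₁ := ⟨S.hL₁.le, le_rfl⟩
  have l0' : (0:ℝ) ∈ Icc (0:ℝ) L₂ := ⟨le_rfl, S.hL₂.le⟩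
  have l2 : L₂ ∈ Icc (0:ℝ) L₂ := ⟨S.hL₂.le, le_rfl⟩
  have key := ww_div L₁ L₂ h e e1 e2
    (fun x y z => F x y z * p1 x y z)
    (fun x y z => F1 x y z * p1 x y z + F x y z * p11 x y z)
    (fun x y z => F x y z * p2 x y z)
    (fun x y z => F2 x y z * p2 x y z + F x y z * p22 x y z)
    (fun x y z => F x y z * p3 x y z)
    (fun x y z => F3 x y z * p3 x y z + F x y z * p33 x y z)
    S.ce S.ce1 S.ce2 (by fun_prop) (by fun_prop) (by fun_prop) (by fun_prop) (by fun_prop)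
    (by fun_prop) S.de1 S.de2
    (fun x y z => (dF1 x y z).mul (S.d11 x y z))
    (fun x y z => (dF2 x y z).mul (S.d22 x y z))
    (fun x y z => (dF3 x y z).mul (S.d33 x y z))
  have a1 : ∫ x in (0:ℝ)..L₁, ∫ y in (0:ℝ)..L₂, F x y (-h) * p3 x y (-h) = 0 := by
    apply ww_int1_zero _ _ _ S.hL₁.le
    intro x hx
    apply ww_int1_zero _ _ _ S.hL₂.le
    intro y hy
    rw [S.bc3 x hx y hy, mul_zero]
  have a2 : ∫ y in (0:ℝ)..L₂, ((∫ z in (-h)..(e L₁ y), F L₁ y z * p1 L₁ y z)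
      - ∫ z in (-h)..(e 0 y), F 0 y z * p1 0 y z) = 0 := by
    apply ww_int1_zero _ _ _ S.hL₂.le
    intro y hy
    rw [ww_int1_zero _ _ _ (S.low L₁ l1 y hy), ww_int1_zero _ _ _ (S.low 0 l0 y hy), sub_zero]
    · intro z hz; rw [S.bc10 y hy z hz, mul_zero]
    · intro z hz; rw [S.bc1L y hy z hz, mul_zero]
  have a3 : ∫ x in (0:ℝ)..L₁, ((∫ z in (-h)..(e x L₂), F x L₂ z * p2 x L₂ z)
      - ∫ z in (-h)..(e x 0), F x 0 z * p2 x 0 z) = 0 := by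
    apply ww_int1_zero _ _ _ S.hL₁.le
    intro x hx
    rw [ww_int1_zero _ _ _ (S.low x hx L₂ l2), ww_int1_zero _ _ _ (S.low x hx 0 l0'), sub_zero]
    · intro z hz; rw [S.bc20 x hx z hz, mul_zero]
    · intro z hz; rw [S.bc2L x hx z hz, mul_zero]
  rw [a1, a2, a3] at key
  rw [add_zero, sub_zero, sub_zero] at key
  refine Eq.trans ?_ (key.trans ?_)
  · apply ww_int2_congr _ _ _ _ _ _ S.hL₁.le S.hL₂.le
    intro x hx y hy
    rw [S.kin x hx y hy]; ring
  · apply ww_int2_congr _ _ _ _ _ _ S.hL₁.le S.hL₂.le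
    intro x hx y hy
    apply intervalIntegral.integral_congr
    intro z hz
    rw [uIcc_of_le (S.low x hx y hy)] at hz
    have := S.lap x hx y hy z hz
    simp only
    linear_combination F x y z * this

lemma WStatic.pohozaev (S : WStatic L₁ L₂ h e e1 e2 et p1 p2 p3 p11 p12 p13 p22 p23 p33)
    (B : ℝ) (hB : 0 < B)
    (low' : ∀ x ∈ Icc (0:ℝ) L₁, ∀ y ∈ Icc (0:ℝ) L₂, -(4 * h / 9) ≤ e x y)
    (slope : ∀ x ∈ Icc (0:ℝ) L₁, ∀ y ∈ Icc (0:ℝ) L₂, e1 x y ^ 2 + e2 x y ^ 2 ≤ B ^ 2) :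
    -(1 / 2 + 9 * B / 8) * (∫ x in (0:ℝ)..L₁, ∫ y in (0:ℝ)..L₂, ∫ z in (-h)..(e x y),
        (p1 x y z ^ 2 + p2 x y z ^ 2 + p3 x y z ^ 2))
      ≤ ∫ x in (0:ℝ)..L₁, ∫ y in (0:ℝ)..L₂,
        ((x * p1 x y (e x y) + y * p2 x y (e x y) - 5 / 4 * e x y * p3 x y (e x y)) * et x y
          - 1 / 2 * (p1 x y (e x y) ^ 2 + p2 x y (e x y) ^ 2 + p3 x y (e x y) ^ 2)
            * (- (5 / 4) * e x y - (x * e1 x y + y * e2 x y))) := by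
  have c1 := S.c1
  have c2 := S.c2
  have c3 := S.c3
  have c11 := S.c11
  have c12 := S.c12
  have c13 := S.c13
  have c22 := S.c22
  have c23 := S.c23
  have c33 := S.c33
  have ce := S.ce
  have ce1 := S.ce1
  have ce2 := S.ce2
  have l0 : (0:ℝ) ∈ Icc (0:ℝ) L₁ := ⟨le_rfl, S.hL₁.le⟩
  have l1 : L₁ ∈ Icc (0:ℝ) L₁ := ⟨S.hL₁.le, le_rfl⟩
  have l0' : (0:ℝ) ∈ Icc (0:ℝ) L₂ := ⟨le_rfl, S.hL₂.le⟩
  have l2 : L₂ ∈ Icc (0:ℝ) L₂ := ⟨S.hL₂.le, le_rfl⟩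
  have key := ww_div L₁ L₂ h e e1 e2
    (fun x y z => (x * p1 x y z + y * p2 x y z + (z + h - 9 / 4 * (e x y + 4 * h / 9)) * p3 x y z)
      * p1 x y z - 1 / 2 * (p1 x y z ^ 2 + p2 x y z ^ 2 + p3 x y z ^ 2) * x)
    (fun x y z => (p1 x y z + x * p11 x y z + y * p12 x y z - 9 / 4 * e1 x y * p3 x y z
        + (z + h - 9 / 4 * (e x y + 4 * h / 9)) * p13 x y z) * p1 x y z
      + (x * p1 x y z + y * p2 x y z + (z + h - 9 / 4 * (e x y + 4 * h / 9)) * p3 x y z) * p11 x y z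
      - 1 / 2 * (p1 x y z ^ 2 + p2 x y z ^ 2 + p3 x y z ^ 2)
      - (p1 x y z * p11 x y z + p2 x y z * p12 x y z + p3 x y z * p13 x y z) * x)
    (fun x y z => (x * p1 x y z + y * p2 x y z + (z + h - 9 / 4 * (e x y + 4 * h / 9)) * p3 x y z)
      * p2 x y z - 1 / 2 * (p1 x y z ^ 2 + p2 x y z ^ 2 + p3 x y z ^ 2) * y)
    (fun x y z => (x * p12 x y z + p2 x y z + y * p22 x y z - 9 / 4 * e2 x y * p3 x y z
        + (z + h - 9 / 4 * (e x y + 4 * h / 9)) * p23 x y z) * p2 x y z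
      + (x * p1 x y z + y * p2 x y z + (z + h - 9 / 4 * (e x y + 4 * h / 9)) * p3 x y z) * p22 x y z
      - 1 / 2 * (p1 x y z ^ 2 + p2 x y z ^ 2 + p3 x y z ^ 2)
      - (p1 x y z * p12 x y z + p2 x y z * p22 x y z + p3 x y z * p23 x y z) * y)
    (fun x y z => (x * p1 x y z + y * p2 x y z + (z + h - 9 / 4 * (e x y + 4 * h / 9)) * p3 x y z)
      * p3 x y z - 1 / 2 * (p1 x y z ^ 2 + p2 x y z ^ 2 + p3 x y z ^ 2)
        * (z + h - 9 / 4 * (e x y + 4 * h / 9)))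
    (fun x y z => (x * p13 x y z + y * p23 x y z + p3 x y z
        + (z + h - 9 / 4 * (e x y + 4 * h / 9)) * p33 x y z) * p3 x y z
      + (x * p1 x y z + y * p2 x y z + (z + h - 9 / 4 * (e x y + 4 * h / 9)) * p3 x y z) * p33 x y z
      - 1 / 2 * (p1 x y z ^ 2 + p2 x y z ^ 2 + p3 x y z ^ 2)
      - (p1 x y z * p13 x y z + p2 x y z * p23 x y z + p3 x y z * p33 x y z)
        * (z + h - 9 / 4 * (e x y + 4 * h / 9)))
    S.ce S.ce1 S.ce2 (by fun_prop) (by fun_prop) (by fun_prop) (by fun_prop) (by fun_prop)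
    (by fun_prop) S.de1 S.de2
    (fun x y z => by
      have i := hasDerivAt_id' x
      have h1 := S.d11 x y z
      have h2 := S.d21 x y z
      have h3 := S.d31 x y z
      have he := S.de1 x y
      have hf := ((he.add_const (4 * h / 9)).const_mul (9 / 4)).const_sub (z + h)
      exact (((((i.mul h1).add (h2.const_mul y)).add (hf.mul h3)).mul h1).sub
        (((((h1.pow 2).add (h2.pow 2)).add (h3.pow 2)).const_mul (1 / 2)).mul i)).congr_deriv
          (by simp only [Pi.add_apply, Pi.mul_apply, Pi.pow_apply]; push_cast; ring))
    (fun x y z => by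
      have i := hasDerivAt_id' y
      have h1 := S.d12 x y z
      have h2 := S.d22 x y z
      have h3 := S.d32 x y z
      have he := S.de2 x y
      have hf := ((he.add_const (4 * h / 9)).const_mul (9 / 4)).const_sub (z + h)
      exact (((((h1.const_mul x).add (i.mul h2)).add (hf.mul h3)).mul h2).sub
        (((((h1.pow 2).add (h2.pow 2)).add (h3.pow 2)).const_mul (1 / 2)).mul i)).congr_deriv
          (by simp only [Pi.add_apply, Pi.mul_apply, Pi.pow_apply]; push_cast; ring))
    (fun x y z => by
      have i := hasDerivAt_id' z
      have h1 := S.d13 x y z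
      have h2 := S.d23 x y z
      have h3 := S.d33 x y z
      have hf := (i.add_const h).sub_const (9 / 4 * (e x y + 4 * h / 9))
      exact (((((h1.const_mul x).add (h2.const_mul y)).add (hf.mul h3)).mul h3).sub
        (((((h1.pow 2).add (h2.pow 2)).add (h3.pow 2)).const_mul (1 / 2)).mul hf)).congr_deriv
          (by simp only [Pi.add_apply, Pi.mul_apply, Pi.pow_apply]; push_cast; ring))
  beta_reduce at key
  refine le_trans ?_ (le_of_eq (key.symm.trans ?_))
  · refine ww_comb _ _ _ _ _ ?_ ?_ ?_ ?_
    · rw [← ww_int2_smul]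
      apply ww_int2_mono _ _ _ _ _ _ S.hL₁.le S.hL₂.le
      · refine continuous_const.mul ?_
        apply intervalIntegral.continuous_parametric_intervalIntegral_of_continuous
        · simp only [Function.uncurry_def]; fun_prop
        · fun_prop
      · apply intervalIntegral.continuous_parametric_intervalIntegral_of_continuous
        · simp only [Function.uncurry_def]; fun_prop
        · fun_prop
      intro x hx y hy
      rw [← intervalIntegral.integral_const_mul]
      apply intervalIntegral.integral_mono_on (μ := volume) (S.low x hx y hy)
      · exact Continuous.intervalIntegrable (by fun_prop) _ _
      · exact Continuous.intervalIntegrable (by fun_prop) _ _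
      intro z hz
      have hl := S.lap x hx y hy z hz
      have hs := ww_pw (e1 x y) (e2 x y) (p1 x y z) (p2 x y z) (p3 x y z) B hB (slope x hx y hy)
      have hm := congrArg (fun w => (x * p1 x y z + y * p2 x y z
        + (z + h - 9 / 4 * (e x y + 4 * h / 9)) * p3 x y z) * w) hl
      simp only [mul_zero] at hm
      linarith
    · have h0 : ∫ x in (0:ℝ)..L₁, ∫ y in (0:ℝ)..L₂, (0:ℝ) = 0 := by simp
      refine h0.symm.le.trans ?_
      apply ww_int2_mono _ _ _ _ _ _ S.hL₁.le S.hL₂.le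
        continuous_const (by fun_prop)
      intro x hx y hy
      rw [S.bc3 x hx y hy]
      have := mul_nonneg (add_nonneg (sq_nonneg (p1 x y (-h))) (sq_nonneg (p2 x y (-h))))
        (sub_nonneg.2 (low' x hx y hy))
      linarith
    · apply ww_int1_nonpos _ _ _ S.hL₂.le
      intro y hy
      rw [ww_int1_zero _ _ _ (S.low 0 l0 y hy), sub_zero]
      · apply ww_int1_nonpos _ _ _ (S.low L₁ l1 y hy)
        intro z hz
        rw [S.bc1L y hy z hz]
        have := mul_nonneg (add_nonneg (sq_nonneg (p2 L₁ y z)) (sq_nonneg (p3 L₁ y z))) S.hL₁.le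
        linarith
      · intro z hz; rw [S.bc10 y hy z hz]; ring
    · apply ww_int1_nonpos _ _ _ S.hL₁.le
      intro x hx
      rw [ww_int1_zero _ _ _ (S.low x hx 0 l0'), sub_zero]
      · apply ww_int1_nonpos _ _ _ (S.low x hx L₂ l2)
        intro z hz
        rw [S.bc2L x hx z hz]
        have := mul_nonneg (add_nonneg (sq_nonneg (p1 x L₂ z)) (sq_nonneg (p3 x L₂ z))) S.hL₂.le
        linarith
      · intro z hz; rw [S.bc20 x hx z hz]; ring
  · apply ww_int2_congr _ _ _ _ _ _ S.hL₁.le S.hL₂.le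
    intro x hx y hy
    rw [S.kin x hx y hy]; ring
end

/-! ### the solution at a fixed time -/

lemma WS3.ct {f : ℝ → ℝ → ℝ → ℝ} (hf : WS3 f) (t : ℝ) :
    Continuous (fun p : ℝ × ℝ => f t p.1 p.2) := by
  have := hf.cont
  fun_prop

lemma WS4.ct {f : ℝ → ℝ → ℝ → ℝ → ℝ} (hf : WS4 f) (t : ℝ) :
    Continuous (fun p : ℝ × ℝ × ℝ => f t p.1 p.2.1 p.2.2) := by
  have := hf.cont
  fun_prop

lemma WS4.cs {f : ℝ → ℝ → ℝ → ℝ → ℝ} {e : ℝ → ℝ → ℝ → ℝ} (hf : WS4 f) (he : WS3 e) :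
    Continuous (fun p : ℝ × ℝ × ℝ => f p.1 p.2.1 p.2.2 (e p.1 p.2.1 p.2.2)) := by
  have := hf.cont
  have := he.cont
  fun_prop

section
variable {L₁ L₂ h g T : ℝ} {η : ℝ → ℝ → ℝ → ℝ} {ϕ : ℝ → ℝ → ℝ → ℝ → ℝ}

lemma ww_static (hL₁ : 0 < L₁) (hL₂ : 0 < L₂) (hh : 0 < h)
    (hsol : IsWW3D L₁ L₂ h g T η ϕ) (t : ℝ) (ht : t ∈ Icc (0:ℝ) T) :
    WStatic L₁ L₂ h (η t) (etaX1 η t) (etaX2 η t) (etaT3 η t)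
      (phiX1 ϕ t) (phiX2 ϕ t) (phiY3 ϕ t)
      (phiX1 (phiX1 ϕ) t) (phiX1 (phiX2 ϕ) t) (phiX1 (phiY3 ϕ) t)
      (phiX2 (phiX2 ϕ) t) (phiX2 (phiY3 ϕ) t) (phiY3 (phiY3 ϕ) t) := by
  have sη : WS3 η := hsol.smooth_eta
  have sϕ : WS4 ϕ := hsol.smooth_phi
  exact
  { hL₁ := hL₁
    hL₂ := hL₂
    ce := sη.ct t
    ce1 := sη.s1.ct t
    ce2 := sη.s2.ct t
    cet := sη.sT.ct t
    de1 := fun x y => sη.d1 t x y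
    de2 := fun x y => sη.d2 t x y
    c1 := sϕ.s1.ct t
    c2 := sϕ.s2.ct t
    c3 := sϕ.s3.ct t
    c11 := sϕ.s1.s1.ct t
    c12 := sϕ.s2.s1.ct t
    c13 := sϕ.s3.s1.ct t
    c22 := sϕ.s2.s2.ct t
    c23 := sϕ.s3.s2.ct t
    c33 := sϕ.s3.s3.ct t
    d11 := fun x y z => sϕ.s1.d1 t x y z
    d12 := fun x y z => (sϕ.s1.d2 t x y z).congr_deriv (sϕ.sym21 t x y z)
    d13 := fun x y z => (sϕ.s1.d3 t x y z).congr_deriv (sϕ.sym31 t x y z)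
    d21 := fun x y z => sϕ.s2.d1 t x y z
    d22 := fun x y z => sϕ.s2.d2 t x y z
    d23 := fun x y z => (sϕ.s2.d3 t x y z).congr_deriv (sϕ.sym32 t x y z)
    d31 := fun x y z => sϕ.s3.d1 t x y z
    d32 := fun x y z => sϕ.s3.d2 t x y z
    d33 := fun x y z => sϕ.s3.d3 t x y z
    low := fun x hx y hy => by linarith [hsol.eta_lower t ht x hx y hy]
    lap := fun x hx y hy z hz => hsol.laplace t ht x hx y hy z hz
    bc10 := fun y hy z hz => hsol.bc_x1 t ht 0 (by simp) y hy z hz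
    bc1L := fun y hy z hz => hsol.bc_x1 t ht L₁ (by simp) y hy z hz
    bc20 := fun x hx z hz => hsol.bc_x2 t ht 0 (by simp) x hx z hz
    bc2L := fun x hx z hz => hsol.bc_x2 t ht L₂ (by simp) x hx z hz
    bc3 := fun x hx y hy => hsol.bc_bottom t ht x hx y hy
    kin := fun x hx y hy => hsol.kinematic t ht x hx y hy }

/-- the Dirichlet energy is a surface integral -/
lemma ww_dir (hL₁ : 0 < L₁) (hL₂ : 0 < L₂) (hh : 0 < h)
    (hsol : IsWW3D L₁ L₂ h g T η ϕ) (t : ℝ) (ht : t ∈ Icc (0:ℝ) T) :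
    ∫ x in (0:ℝ)..L₁, ∫ y in (0:ℝ)..L₂, psi3 η ϕ t x y * etaT3 η t x y
      = ∫ x in (0:ℝ)..L₁, ∫ y in (0:ℝ)..L₂, ∫ z in (-h)..(η t x y), gradSq3 ϕ t x y z := by
  have sϕ : WS4 ϕ := hsol.smooth_phi
  have S := ww_static hL₁ hL₂ hh hsol t ht
  have key := S.flux (ϕ t) (phiX1 ϕ t) (phiX2 ϕ t) (phiY3 ϕ t) (sϕ.ct t) S.c1 S.c2 S.c3
    (sϕ.d1 t) (sϕ.d2 t) (sϕ.d3 t)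
  refine key.trans ?_
  apply ww_int2_congr _ _ _ _ _ _ hL₁.le hL₂.le
  intro x _ y _
  apply intervalIntegral.integral_congr
  intro z _
  simp only [gradSq3]; ring

lemma ww_energy_deriv (hL₁ : 0 < L₁) (hL₂ : 0 < L₂) (hh : 0 < h)
    (hsol : IsWW3D L₁ L₂ h g T η ϕ) (t : ℝ) (ht : t ∈ Icc (0:ℝ) T) :
    HasDerivAt (energy3D L₁ L₂ h g η ϕ) 0 t := by
  have sη : WS3 η := hsol.smooth_eta
  have sϕ : WS4 ϕ := hsol.smooth_phi
  have cη := sη.cont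
  have cηT := sη.sT.cont
  have c1 := sϕ.s1.cont
  have c2 := sϕ.s2.cont
  have c3 := sϕ.s3.cont
  have cT := sϕ.sT.cont
  have c1T := sϕ.s1.sT.cont
  have c2T := sϕ.s2.sT.cont
  have c3T := sϕ.s3.sT.cont
  have k1 := ww_int2_deriv (fun t x y => η t x y ^ 2) (fun t x y => 2 * η t x y * etaT3 η t x y)
    0 L₁ 0 L₂ t (by fun_prop) (by fun_prop)
    (fun t x y => ((sη.dT t x y).pow 2).congr_deriv (by push_cast; ring))
  have cI : ∀ F : ℝ → ℝ → ℝ → ℝ → ℝ,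
      Continuous (fun p : ℝ × ℝ × ℝ × ℝ => F p.1 p.2.1 p.2.2.1 p.2.2.2) →
      Continuous (fun p : ℝ × ℝ × ℝ => ∫ z in (-h)..(η p.1 p.2.1 p.2.2), F p.1 p.2.1 p.2.2 z) := by
    intro F hF
    apply intervalIntegral.continuous_parametric_intervalIntegral_of_continuous
    · simp only [Function.uncurry_def]; fun_prop
    · fun_prop
  have cg : Continuous (fun p : ℝ × ℝ × ℝ × ℝ => gradSq3 ϕ p.1 p.2.1 p.2.2.1 p.2.2.2) := by
    unfold gradSq3; fun_prop
  have cg' : Continuous (fun p : ℝ × ℝ × ℝ × ℝ =>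
      2 * (phiT3 (phiX1 ϕ) p.1 p.2.1 p.2.2.1 p.2.2.2 * phiX1 ϕ p.1 p.2.1 p.2.2.1 p.2.2.2
        + phiT3 (phiX2 ϕ) p.1 p.2.1 p.2.2.1 p.2.2.2 * phiX2 ϕ p.1 p.2.1 p.2.2.1 p.2.2.2
        + phiT3 (phiY3 ϕ) p.1 p.2.1 p.2.2.1 p.2.2.2 * phiY3 ϕ p.1 p.2.1 p.2.2.1 p.2.2.2)) := by
    fun_prop
  have cI1 := cI _ cg
  have cI2 := cI (fun t x y z => 2 * (phiT3 (phiX1 ϕ) t x y z * phiX1 ϕ t x y z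
        + phiT3 (phiX2 ϕ) t x y z * phiX2 ϕ t x y z
        + phiT3 (phiY3 ϕ) t x y z * phiY3 ϕ t x y z)) cg'
  have k2 := ww_int2_deriv (fun t x y => ∫ z in (-h)..(η t x y), gradSq3 ϕ t x y z)
    (fun t x y => (∫ z in (-h)..(η t x y), 2 * (phiT3 (phiX1 ϕ) t x y z * phiX1 ϕ t x y z
        + phiT3 (phiX2 ϕ) t x y z * phiX2 ϕ t x y z
        + phiT3 (phiY3 ϕ) t x y z * phiY3 ϕ t x y z))
      + gradSq3 ϕ t x y (η t x y) * etaT3 η t x y)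
    0 L₁ 0 L₂ t cI1 (cI2.add (by fun_prop))
    (fun t x y => by
      apply ww_leibniz (fun t z => gradSq3 ϕ t x y z)
        (fun t z => 2 * (phiT3 (phiX1 ϕ) t x y z * phiX1 ϕ t x y z
        + phiT3 (phiX2 ϕ) t x y z * phiX2 ϕ t x y z
        + phiT3 (phiY3 ϕ) t x y z * phiY3 ϕ t x y z)) _ _ (fun s => η s x y)
        _ (by fun_prop) (by fun_prop)
      · intro s z
        exact ((((sϕ.s1.dT s x y z).pow 2).add ((sϕ.s2.dT s x y z).pow 2)).add
          ((sϕ.s3.dT s x y z).pow 2)).congr_deriv (by push_cast; ring)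
      · exact sη.dT t x y)
  have S := ww_static hL₁ hL₂ hh hsol t ht
  have key := S.flux (phiT3 ϕ t) (phiX1 (phiT3 ϕ) t) (phiX2 (phiT3 ϕ) t) (phiY3 (phiT3 ϕ) t)
    (sϕ.sT.ct t) (sϕ.sT.s1.ct t) (sϕ.sT.s2.ct t) (sϕ.sT.s3.ct t)
    (sϕ.sT.d1 t) (sϕ.sT.d2 t) (sϕ.sT.d3 t)
  refine ((k1.const_mul (g / 2)).add (k2.const_mul (1 / 2))).congr_deriv ?_
  rw [ww_int2_add (fun x y => ∫ z in (-h)..(η t x y), 2 * (phiT3 (phiX1 ϕ) t x y z * phiX1 ϕ t x y z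
        + phiT3 (phiX2 ϕ) t x y z * phiX2 ϕ t x y z
        + phiT3 (phiY3 ϕ) t x y z * phiY3 ϕ t x y z))
      (fun x y => gradSq3 ϕ t x y (η t x y) * etaT3 η t x y) 0 L₁ 0 L₂ (by fun_prop) (by fun_prop)]
  have e2 : ∫ x in (0:ℝ)..L₁, ∫ y in (0:ℝ)..L₂, ∫ z in (-h)..(η t x y),
      2 * (phiT3 (phiX1 ϕ) t x y z * phiX1 ϕ t x y z
        + phiT3 (phiX2 ϕ) t x y z * phiX2 ϕ t x y z
        + phiT3 (phiY3 ϕ) t x y z * phiY3 ϕ t x y z)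
      = 2 * ∫ x in (0:ℝ)..L₁, ∫ y in (0:ℝ)..L₂, phiT3 ϕ t x y (η t x y) * etaT3 η t x y := by
    rw [key, ← ww_int2_smul]
    apply ww_int2_congr _ _ _ _ _ _ hL₁.le hL₂.le
    intro x _ y _
    rw [← intervalIntegral.integral_const_mul]
    apply intervalIntegral.integral_congr
    intro z _
    simp only [sϕ.symT1, sϕ.symT2, sϕ.symT3]
  rw [e2]
  have e3 : ∫ x in (0:ℝ)..L₁, ∫ y in (0:ℝ)..L₂, gradSq3 ϕ t x y (η t x y) * etaT3 η t x y
      = ∫ x in (0:ℝ)..L₁, ∫ y in (0:ℝ)..L₂, ((-2) * (phiT3 ϕ t x y (η t x y) * etaT3 η t x y)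
        + (-g) * (2 * η t x y * etaT3 η t x y)) := by
    apply ww_int2_congr _ _ _ _ _ _ hL₁.le hL₂.le
    intro x hx y hy
    have := hsol.bernoulli t ht x hx y hy
    unfold gradSq3
    linear_combination 2 * etaT3 η t x y * this
  rw [e3, ww_int2_add (fun x y => (-2) * (phiT3 ϕ t x y (η t x y) * etaT3 η t x y))
    (fun x y => (-g) * (2 * η t x y * etaT3 η t x y)) 0 L₁ 0 L₂ (by fun_prop) (by fun_prop),
    ww_int2_smul, ww_int2_smul]
  ring

lemma ww_energy_const (hL₁ : 0 < L₁) (hL₂ : 0 < L₂) (hh : 0 < h)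
    (hsol : IsWW3D L₁ L₂ h g T η ϕ) (t : ℝ) (ht : t ∈ Icc (0:ℝ) T) :
    energy3D L₁ L₂ h g η ϕ t = energy3D L₁ L₂ h g η ϕ 0 := by
  apply constant_of_has_deriv_right_zero (a := 0) (b := T) _ _ t ht
  · intro s hs
    exact (ww_energy_deriv hL₁ hL₂ hh hsol s hs).continuousAt.continuousWithinAt
  · intro s hs
    exact (ww_energy_deriv hL₁ hL₂ hh hsol s (Ico_subset_Icc_self hs)).hasDerivWithinAt
end

/-! ### the multiplier identity -/

def wwK (L₁ L₂ : ℝ) (η ψ : ℝ → ℝ → ℝ → ℝ) (t : ℝ) : ℝ :=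
  ∫ x in (0:ℝ)..L₁, ∫ y in (0:ℝ)..L₂,
    η t x y * (x * etaX1 ψ t x y + y * etaX2 ψ t x y + 3 / 4 * ψ t x y)

def wwKp (L₁ L₂ : ℝ) (η ψ : ℝ → ℝ → ℝ → ℝ) (t : ℝ) : ℝ :=
  ∫ x in (0:ℝ)..L₁, ∫ y in (0:ℝ)..L₂,
    (etaT3 η t x y * (x * etaX1 ψ t x y + y * etaX2 ψ t x y + 3 / 4 * ψ t x y)
      + η t x y * (x * etaX1 (etaT3 ψ) t x y + y * etaX2 (etaT3 ψ) t x y + 3 / 4 * etaT3 ψ t x y))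

def wwBeta (L₁ L₂ g : ℝ) (η ψ : ℝ → ℝ → ℝ → ℝ) (t : ℝ) : ℝ :=
  L₁ * (∫ y in (0:ℝ)..L₂, (-(η t L₁ y) * etaT3 ψ t L₁ y - g / 2 * (η t L₁ y) ^ 2))
    + L₂ * ∫ x in (0:ℝ)..L₁, (-(η t x L₂) * etaT3 ψ t x L₂ - g / 2 * (η t x L₂) ^ 2)

lemma wwK_deriv (L₁ L₂ : ℝ) (η ψ : ℝ → ℝ → ℝ → ℝ) (hη : WS3 η) (hψ : WS3 ψ) (t : ℝ) :
    HasDerivAt (wwK L₁ L₂ η ψ) (wwKp L₁ L₂ η ψ t) t := by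
  have a1 := hη.cont
  have a2 := hη.sT.cont
  have a3 := hψ.cont
  have a4 := hψ.s1.cont
  have a5 := hψ.s2.cont
  have a6 := hψ.sT.cont
  have a7 := hψ.sT.s1.cont
  have a8 := hψ.sT.s2.cont
  apply ww_int2_deriv (fun t x y => η t x y * (x * etaX1 ψ t x y + y * etaX2 ψ t x y
    + 3 / 4 * ψ t x y))
    (fun t x y => etaT3 η t x y * (x * etaX1 ψ t x y + y * etaX2 ψ t x y + 3 / 4 * ψ t x y)
      + η t x y * (x * etaX1 (etaT3 ψ) t x y + y * etaX2 (etaT3 ψ) t x y + 3 / 4 * etaT3 ψ t x y))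
    0 L₁ 0 L₂ t (by fun_prop) (by fun_prop)
  intro t x y
  have e1 := (hψ.s1.dT t x y).congr_deriv (hψ.symT1 t x y)
  have e2 := (hψ.s2.dT t x y).congr_deriv (hψ.symT2 t x y)
  exact (hη.dT t x y).mul (((e1.const_mul x).add (e2.const_mul y)).add
    ((hψ.dT t x y).const_mul (3 / 4)))

lemma wwKp_cont (L₁ L₂ : ℝ) (η ψ : ℝ → ℝ → ℝ → ℝ) (hη : WS3 η) (hψ : WS3 ψ) :
    Continuous (wwKp L₁ L₂ η ψ) := by
  have a1 := hη.cont
  have a2 := hη.sT.cont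
  have a3 := hψ.cont
  have a4 := hψ.s1.cont
  have a5 := hψ.s2.cont
  have a6 := hψ.sT.cont
  have a7 := hψ.sT.s1.cont
  have a8 := hψ.sT.s2.cont
  apply ww_int2_cont (fun t x y => etaT3 η t x y * (x * etaX1 ψ t x y + y * etaX2 ψ t x y
      + 3 / 4 * ψ t x y)
      + η t x y * (x * etaX1 (etaT3 ψ) t x y + y * etaX2 (etaT3 ψ) t x y + 3 / 4 * etaT3 ψ t x y))
  fun_prop

lemma wwBeta_cont (L₁ L₂ g : ℝ) (η ψ : ℝ → ℝ → ℝ → ℝ) (hη : WS3 η) (hψ : WS3 ψ) :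
    Continuous (wwBeta L₁ L₂ g η ψ) := by
  have a1 := hη.cont
  have a6 := hψ.sT.cont
  refine (continuous_const.mul ?_).add (continuous_const.mul ?_)
  · apply ww_cont1 (fun t y => (-(η t L₁ y) * etaT3 ψ t L₁ y - g / 2 * (η t L₁ y) ^ 2))
    fun_prop
  · apply ww_cont1 (fun t x => (-(η t x L₂) * etaT3 ψ t x L₂ - g / 2 * (η t x L₂) ^ 2))
    fun_prop

lemma ww_sum (L₁ L₂ g : ℝ) (η ψ : ℝ → ℝ → ℝ → ℝ) (hη : WS3 η) (hψ : WS3 ψ) (t : ℝ) :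
    wwBeta L₁ L₂ g η ψ t + wwKp L₁ L₂ η ψ t = ∫ x in (0:ℝ)..L₁, ∫ y in (0:ℝ)..L₂,
      (etaT3 η t x y * (x * etaX1 ψ t x y + y * etaX2 ψ t x y + 3 / 4 * ψ t x y)
        - 5 / 4 * η t x y * etaT3 ψ t x y - g * η t x y ^ 2
        - (x * etaX1 η t x y + y * etaX2 η t x y) * (etaT3 ψ t x y + g * η t x y)) := by
  have a1 := hη.ct t
  have a2 := hη.sT.ct t
  have a3 := hψ.ct t
  have a4 := hψ.s1.ct t
  have a5 := hψ.s2.ct t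
  have a6 := hψ.sT.ct t
  have a7 := hψ.sT.s1.ct t
  have a8 := hψ.sT.s2.ct t
  have a9 := hη.s1.ct t
  have a10 := hη.s2.ct t
  have k1 := ww_int_d1 (fun x y => x * (-(η t x y) * etaT3 ψ t x y - g / 2 * (η t x y) ^ 2))
    (fun x y => (-(η t x y) * etaT3 ψ t x y - g / 2 * (η t x y) ^ 2)
      + x * (-(etaX1 η t x y) * etaT3 ψ t x y - η t x y * etaX1 (etaT3 ψ) t x y
        - g * η t x y * etaX1 η t x y)) 0 L₁ 0 L₂ (by fun_prop)
    (fun x y => ((hasDerivAt_id' x).mul (((hη.d1 t x y).neg.mul (hψ.sT.d1 t x y)).sub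
      (((hη.d1 t x y).pow 2).const_mul (g / 2)))).congr_deriv (by
        simp only [Pi.sub_apply, Pi.neg_apply, Pi.mul_apply, Pi.pow_apply]; push_cast; ring))
  have k2 := ww_int_d2 (fun x y => y * (-(η t x y) * etaT3 ψ t x y - g / 2 * (η t x y) ^ 2))
    (fun x y => (-(η t x y) * etaT3 ψ t x y - g / 2 * (η t x y) ^ 2)
      + y * (-(etaX2 η t x y) * etaT3 ψ t x y - η t x y * etaX2 (etaT3 ψ) t x y
        - g * η t x y * etaX2 η t x y)) 0 L₁ 0 L₂ (by fun_prop)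
    (fun x y => ((hasDerivAt_id' y).mul (((hη.d2 t x y).neg.mul (hψ.sT.d2 t x y)).sub
      (((hη.d2 t x y).pow 2).const_mul (g / 2)))).congr_deriv (by
        simp only [Pi.sub_apply, Pi.neg_apply, Pi.mul_apply, Pi.pow_apply]; push_cast; ring))
  simp only [zero_mul, sub_zero, intervalIntegral.integral_const_mul] at k1 k2
  unfold wwBeta wwKp
  rw [← k1, ← k2, ← ww_int2_add _ _ _ _ _ _ (by fun_prop) (by fun_prop),
    ← ww_int2_add _ _ _ _ _ _ (by fun_prop) (by fun_prop)]
  congr 1; funext x; congr 1; funext y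
  ring

section
variable {L₁ L₂ h g T : ℝ} {η : ℝ → ℝ → ℝ → ℝ} {ϕ : ℝ → ℝ → ℝ → ℝ → ℝ}

lemma ww_D_nonneg (hL₁ : 0 < L₁) (hL₂ : 0 < L₂) (hh : 0 < h)
    (hsol : IsWW3D L₁ L₂ h g T η ϕ) (t : ℝ) (ht : t ∈ Icc (0:ℝ) T) :
    0 ≤ ∫ x in (0:ℝ)..L₁, ∫ y in (0:ℝ)..L₂, ∫ z in (-h)..(η t x y), gradSq3 ϕ t x y z := by
  apply intervalIntegral.integral_nonneg hL₁.le
  intro x hx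
  apply intervalIntegral.integral_nonneg hL₂.le
  intro y hy
  apply intervalIntegral.integral_nonneg ((ww_static hL₁ hL₂ hh hsol t ht).low x hx y hy)
  intro z _
  unfold gradSq3
  positivity

lemma ww_E_nonneg (hL₁ : 0 < L₁) (hL₂ : 0 < L₂) (f : ℝ → ℝ → ℝ) :
    0 ≤ ∫ x in (0:ℝ)..L₁, ∫ y in (0:ℝ)..L₂, (f x y) ^ 2 := by
  apply intervalIntegral.integral_nonneg hL₁.le
  intro x hx
  apply intervalIntegral.integral_nonneg hL₂.le
  intro y hy
  positivity

lemma ww_rate (hL₁ : 0 < L₁) (hL₂ : 0 < L₂) (hh : 0 < h) (hg : 0 < g)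
    (hsol : IsWW3D L₁ L₂ h g T η ϕ)
    (heta : ∀ t ∈ Icc (0:ℝ) T, ∀ x₁ ∈ Icc (0:ℝ) L₁, ∀ x₂ ∈ Icc (0:ℝ) L₂,
      -(4 * h / 9) ≤ η t x₁ x₂)
    (B : ℝ) (hB : 0 < B)
    (hslope : ∀ t ∈ Icc (0:ℝ) T, ∀ x₁ ∈ Icc (0:ℝ) L₁, ∀ x₂ ∈ Icc (0:ℝ) L₂,
      Real.sqrt ((etaX1 η t x₁ x₂) ^ 2 + (etaX2 η t x₁ x₂) ^ 2) ≤ B)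
    (t : ℝ) (ht : t ∈ Icc (0:ℝ) T) :
    (2 - 9 * B) / 4 * energy3D L₁ L₂ h g η ϕ 0
      ≤ wwBeta L₁ L₂ g η (psi3 η ϕ) t + wwKp L₁ L₂ η (psi3 η ϕ) t := by
  have sη : WS3 η := hsol.smooth_eta
  have sϕ : WS4 ϕ := hsol.smooth_phi
  have sψ : WS3 (psi3 η ϕ) := ww_psi_s sη sϕ
  have S := ww_static hL₁ hL₂ hh hsol t ht
  have P := S.pohozaev B hB (heta t ht) (fun x hx y hy => by
    have := hslope t ht x hx y hy
    exact (Real.sqrt_le_left hB.le).1 this)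
  have hD := ww_dir hL₁ hL₂ hh hsol t ht
  have hDn := ww_D_nonneg hL₁ hL₂ hh hsol t ht
  have hEn := ww_E_nonneg hL₁ hL₂ (η t)
  have b1 := sη.ct t
  have b2 := sη.sT.ct t
  have b3 := sη.s1.ct t
  have b4 := sη.s2.ct t
  have b5 := sψ.ct t
  have c1 := S.c1
  have c2 := S.c2
  have c3 := S.c3
  have e : wwBeta L₁ L₂ g η (psi3 η ϕ) t + wwKp L₁ L₂ η (psi3 η ϕ) t
      = g / 4 * (∫ x in (0:ℝ)..L₁, ∫ y in (0:ℝ)..L₂, η t x y ^ 2)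
        + 3 / 4 * (∫ x in (0:ℝ)..L₁, ∫ y in (0:ℝ)..L₂, psi3 η ϕ t x y * etaT3 η t x y)
        + ∫ x in (0:ℝ)..L₁, ∫ y in (0:ℝ)..L₂,
        ((x * phiX1 ϕ t x y (η t x y) + y * phiX2 ϕ t x y (η t x y)
            - 5 / 4 * η t x y * phiY3 ϕ t x y (η t x y)) * etaT3 η t x y
          - 1 / 2 * (phiX1 ϕ t x y (η t x y) ^ 2 + phiX2 ϕ t x y (η t x y) ^ 2
            + phiY3 ϕ t x y (η t x y) ^ 2)
            * (- (5 / 4) * η t x y - (x * etaX1 η t x y + y * etaX2 η t x y))) := by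
    rw [ww_sum L₁ L₂ g η _ sη sψ t, ← ww_int2_smul, ← ww_int2_smul,
      ← ww_int2_add _ _ _ _ _ _ (by fun_prop) (by fun_prop),
      ← ww_int2_add _ _ _ _ _ _ (by fun_prop) (by fun_prop)]
    apply ww_int2_congr _ _ _ _ _ _ hL₁.le hL₂.le
    intro x hx y hy
    have hb := hsol.bernoulli t ht x hx y hy
    rw [ww_psi_1 sη sϕ, ww_psi_2 sη sϕ, ww_psi_T sη sϕ]
    linear_combination (-(5 / 4) * η t x y - (x * etaX1 η t x y + y * etaX2 η t x y)) * hb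
  rw [e, hD, ← ww_energy_const hL₁ hL₂ hh hsol t ht]
  unfold energy3D
  have P' := P
  change -(1 / 2 + 9 * B / 8) * (∫ x in (0:ℝ)..L₁, ∫ y in (0:ℝ)..L₂, ∫ z in (-h)..(η t x y),
    gradSq3 ϕ t x y z) ≤ _ at P'
  have h2 := mul_nonneg (mul_nonneg hB.le hg.le) hEn
  nlinarith [P', hDn, h2]

lemma ww_bigB (hT0 : 0 < T) (hL₁ : 0 < L₁) (hL₂ : 0 < L₂) (hh : 0 < h) (hg : 0 < g)
    (hsol : IsWW3D L₁ L₂ h g T η ϕ)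
    (heta : ∀ t ∈ Icc (0:ℝ) T, ∀ x₁ ∈ Icc (0:ℝ) L₁, ∀ x₂ ∈ Icc (0:ℝ) L₂,
      -(4 * h / 9) ≤ η t x₁ x₂)
    (B : ℝ) (hB : 0 < B)
    (hslope : ∀ t ∈ Icc (0:ℝ) T, ∀ x₁ ∈ Icc (0:ℝ) L₁, ∀ x₂ ∈ Icc (0:ℝ) L₂,
      Real.sqrt ((etaX1 η t x₁ x₂) ^ 2 + (etaX2 η t x₁ x₂) ^ 2) ≤ B) :
    (2 - 9 * B) / 4 * energy3D L₁ L₂ h g η ϕ 0 * T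
      ≤ bigB L₁ L₂ g T η ϕ + (wwK L₁ L₂ η (psi3 η ϕ) T - wwK L₁ L₂ η (psi3 η ϕ) 0) := by
  have sη : WS3 η := hsol.smooth_eta
  have sϕ : WS4 ϕ := hsol.smooth_phi
  have sψ : WS3 (psi3 η ϕ) := ww_psi_s sη sϕ
  have hb : bigB L₁ L₂ g T η ϕ = ∫ t in (0:ℝ)..T, wwBeta L₁ L₂ g η (psi3 η ϕ) t := rfl
  have cK := wwKp_cont L₁ L₂ η _ sη sψ
  have cB := wwBeta_cont L₁ L₂ g η _ sη sψ
  rw [hb, ← intervalIntegral.integral_eq_sub_of_hasDerivAt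
    (fun t _ => wwK_deriv L₁ L₂ η _ sη sψ t) (cK.intervalIntegrable _ _),
    ← intervalIntegral.integral_add (cB.intervalIntegrable _ _) (cK.intervalIntegrable _ _)]
  have := intervalIntegral.integral_mono_on (μ := volume) hT0.le
    (f := fun _ => (2 - 9 * B) / 4 * energy3D L₁ L₂ h g η ϕ 0)
    (continuous_const.intervalIntegrable _ _) ((cB.add cK).intervalIntegrable _ _)
    (fun t ht => ww_rate hL₁ hL₂ hh hg hsol heta B hB hslope t ht)
  rw [intervalIntegral.integral_const] at this
  simp only [smul_eq_mul, sub_zero] at this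
  rw [mul_comm]
  exact this
end

/-! ### the bound of the multiplier term -/

lemma ww_amgm (a b s : ℝ) (hs : 0 < s) : a * b ≤ 1 / 2 * (s * a ^ 2) + 1 / 2 * (1 / s * b ^ 2) := by
  have h : 0 ≤ (s * a - b) ^ 2 / s := by positivity
  have e : (s * a - b) ^ 2 / s = s * a ^ 2 - 2 * (a * b) + 1 / s * b ^ 2 := by
    field_simp
    ring
  linarith

lemma ww_Kup (L₁ L₂ : ℝ) (hL₁ : 0 < L₁) (hL₂ : 0 < L₂) (n u u1 u2 : ℝ → ℝ → ℝ)
    (hn : Continuous (fun p : ℝ × ℝ => n p.1 p.2))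
    (hu : Continuous (fun p : ℝ × ℝ => u p.1 p.2))
    (hu1 : Continuous (fun p : ℝ × ℝ => u1 p.1 p.2))
    (hu2 : Continuous (fun p : ℝ × ℝ => u2 p.1 p.2))
    (du1 : ∀ x y, HasDerivAt (fun s => u s y) (u1 x y) x)
    (du2 : ∀ x y, HasDerivAt (fun s => u x s) (u2 x y) y)
    (mean : ∫ x in (0:ℝ)..L₁, ∫ y in (0:ℝ)..L₂, n x y = 0)
    (q M : ℝ) (hq : 0 < q)
    (hE : q * (∫ x in (0:ℝ)..L₁, ∫ y in (0:ℝ)..L₂, n x y ^ 2) ≤ 2 * M)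
    (hS : (max L₁ L₂) ^ 2 * (∫ x in (0:ℝ)..L₁, ∫ y in (0:ℝ)..L₂, (u1 x y ^ 2 + u2 x y ^ 2)) / q
      ≤ 2 * M) :
    ∫ x in (0:ℝ)..L₁, ∫ y in (0:ℝ)..L₂, n x y * (x * u1 x y + y * u2 x y + 3 / 4 * u x y)
      ≤ 7 / 2 * M := by
  obtain ⟨k, hk⟩ := ww_poincare u u1 u2 L₁ L₂ hL₁ hL₂ hu hu1 hu2 du1 du2
  set L := max L₁ L₂ with hL
  have hLp : 0 < L := lt_max_of_lt_left hL₁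
  have step : ∫ x in (0:ℝ)..L₁, ∫ y in (0:ℝ)..L₂, n x y * (x * u1 x y + y * u2 x y + 3 / 4 * u x y)
      ≤ ∫ x in (0:ℝ)..L₁, ∫ y in (0:ℝ)..L₂, (33 / 40 * q * n x y ^ 2
        + (5 / (7 * q) * L ^ 2 * (u1 x y ^ 2 + u2 x y ^ 2)
        + (9 / (8 * q) * (u x y - k) ^ 2 + 3 / 4 * k * n x y))) := by
    apply ww_int2_mono _ _ _ _ _ _ hL₁.le hL₂.le (by fun_prop) (by fun_prop)
    intro x hx y hy
    have h1 := ww_amgm (n x y) (x * u1 x y + y * u2 x y) (7 / 5 * q) (by positivity)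
    have h2 := ww_amgm (n x y) (u x y - k) (1 / 3 * q) (by positivity)
    have hx2 : x ^ 2 ≤ L ^ 2 := by
      have := hx.2.trans (le_max_left L₁ L₂)
      exact pow_le_pow_left₀ hx.1 this 2
    have hy2 : y ^ 2 ≤ L ^ 2 := by
      have := hy.2.trans (le_max_right L₁ L₂)
      exact pow_le_pow_left₀ hy.1 this 2
    have h3 : (x * u1 x y + y * u2 x y) ^ 2 ≤ 2 * L ^ 2 * (u1 x y ^ 2 + u2 x y ^ 2) := by
      nlinarith [sq_nonneg (x * u2 x y - y * u1 x y),
        mul_nonneg (sub_nonneg.2 hx2) (add_nonneg (sq_nonneg (u1 x y)) (sq_nonneg (u2 x y))),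
        mul_nonneg (sub_nonneg.2 hy2) (add_nonneg (sq_nonneg (u1 x y)) (sq_nonneg (u2 x y)))]
    have h4 := mul_le_mul_of_nonneg_left h3 (show 0 ≤ 1 / (7 / 5 * q) by positivity)
    have r1 : 1 / (7 / 5 * q) = 2 * (5 / (7 * q)) / 2 := by field_simp
    have r2 : 1 / (1 / 3 * q) = 8 / 3 * (9 / (8 * q)) := by field_simp; norm_num
    rw [r1] at h1 h4
    rw [r2] at h2
    nlinarith [h1, h2, h4]
  refine step.trans ?_
  rw [ww_int2_add (fun x y => 33 / 40 * q * n x y ^ 2) (fun x y =>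
        (5 / (7 * q) * L ^ 2 * (u1 x y ^ 2 + u2 x y ^ 2)
        + (9 / (8 * q) * (u x y - k) ^ 2 + 3 / 4 * k * n x y))) 0 L₁ 0 L₂ (by fun_prop) (by fun_prop),
    ww_int2_add (fun x y => 5 / (7 * q) * L ^ 2 * (u1 x y ^ 2 + u2 x y ^ 2)) (fun x y =>
        (9 / (8 * q) * (u x y - k) ^ 2 + 3 / 4 * k * n x y)) 0 L₁ 0 L₂ (by fun_prop) (by fun_prop),
    ww_int2_add (fun x y => 9 / (8 * q) * (u x y - k) ^ 2) (fun x y => 3 / 4 * k * n x y)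
      0 L₁ 0 L₂ (by fun_prop) (by fun_prop),
    ww_int2_smul, ww_int2_smul, ww_int2_smul, ww_int2_smul, mean]
  have hk' := mul_le_mul_of_nonneg_left hk (show 0 ≤ 9 / (8 * q) by positivity)
  set E := ∫ x in (0:ℝ)..L₁, ∫ y in (0:ℝ)..L₂, n x y ^ 2
  set S := ∫ x in (0:ℝ)..L₁, ∫ y in (0:ℝ)..L₂, (u1 x y ^ 2 + u2 x y ^ 2)
  have r1 : 5 / (7 * q) * L ^ 2 * S = 5 / 7 * (L ^ 2 * S / q) := by field_simp
  have r2 : 9 / (8 * q) * (L ^ 2 / 8 * S) = 9 / 64 * (L ^ 2 * S / q) := by field_simp; ring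
  have hM : 0 ≤ M := by
    have hE0 : 0 ≤ E := ww_E_nonneg hL₁ hL₂ n
    have := mul_nonneg hq.le hE0
    linarith
  rw [r1]
  rw [r2] at hk'
  linarith

section
variable {L₁ L₂ h g T : ℝ} {η : ℝ → ℝ → ℝ → ℝ} {ϕ : ℝ → ℝ → ℝ → ℝ → ℝ}

lemma ww_Kbound (hL₁ : 0 < L₁) (hL₂ : 0 < L₂) (hh : 0 < h) (hg : 0 < g)
    (hsol : IsWW3D L₁ L₂ h g T η ϕ) (A : ℝ) (hA : 0 < A)
    (hpsiL2 : ∀ t ∈ Icc (0:ℝ) T,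
      Real.sqrt (∫ x₁ in (0:ℝ)..L₁, ∫ x₂ in (0:ℝ)..L₂,
          ((psi3X1 η ϕ t x₁ x₂) ^ 2 + (psi3X2 η ϕ t x₁ x₂) ^ 2))
        ≤ A * Real.sqrt (2 * energy3D L₁ L₂ h g η ϕ 0))
    (t : ℝ) (ht : t ∈ Icc (0:ℝ) T) :
    |wwK L₁ L₂ η (psi3 η ϕ) t|
      ≤ 7 / 2 * (max L₁ L₂ * A / Real.sqrt g * energy3D L₁ L₂ h g η ϕ 0) := by
  have sη : WS3 η := hsol.smooth_eta
  have sϕ : WS4 ϕ := hsol.smooth_phi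
  have sψ : WS3 (psi3 η ϕ) := ww_psi_s sη sϕ
  have hDn := ww_D_nonneg hL₁ hL₂ hh hsol t ht
  have hEn := ww_E_nonneg hL₁ hL₂ (η t)
  have hc := ww_energy_const hL₁ hL₂ hh hsol t ht
  have hp := hpsiL2 t ht
  set H := energy3D L₁ L₂ h g η ϕ 0
  have hEH : g * (∫ x in (0:ℝ)..L₁, ∫ y in (0:ℝ)..L₂, η t x y ^ 2) ≤ 2 * H := by
    unfold energy3D at hc
    linarith
  have hH : 0 ≤ H := by
    have := mul_nonneg hg.le hEn
    linarith
  have hS : ∫ x in (0:ℝ)..L₁, ∫ y in (0:ℝ)..L₂,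
      (etaX1 (psi3 η ϕ) t x y ^ 2 + etaX2 (psi3 η ϕ) t x y ^ 2) ≤ A ^ 2 * (2 * H) := by
    have h1 := (Real.sqrt_le_left (mul_nonneg hA.le (Real.sqrt_nonneg _))).1 hp
    rw [mul_pow, Real.sq_sqrt (by linarith)] at h1
    exact h1
  set L := max L₁ L₂ with hL
  have hLp : 0 < L := lt_max_of_lt_left hL₁
  set r := Real.sqrt g with hr
  have hrp : 0 < r := Real.sqrt_pos.2 hg
  have hr2 : r ^ 2 = g := Real.sq_sqrt hg.le
  have hE' : L * A * r * (∫ x in (0:ℝ)..L₁, ∫ y in (0:ℝ)..L₂, η t x y ^ 2)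
      ≤ 2 * (L * A / r * H) := by
    rw [← hr2] at hEH
    have := mul_le_mul_of_nonneg_left hEH (show 0 ≤ L * A / r by positivity)
    refine le_trans (le_of_eq ?_) (this.trans (le_of_eq ?_))
    · field_simp
    · ring
  have hS' : L ^ 2 * (∫ x in (0:ℝ)..L₁, ∫ y in (0:ℝ)..L₂,
      (etaX1 (psi3 η ϕ) t x y ^ 2 + etaX2 (psi3 η ϕ) t x y ^ 2)) / (L * A * r)
      ≤ 2 * (L * A / r * H) := by
    have := mul_le_mul_of_nonneg_left hS (show 0 ≤ L ^ 2 / (L * A * r) by positivity)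
    refine le_trans (le_of_eq ?_) (this.trans (le_of_eq ?_))
    · ring
    · field_simp
  have hq : 0 < L * A * r := by positivity
  have cn : Continuous (fun p : ℝ × ℝ => η t p.1 p.2) := sη.ct t
  have up := ww_Kup L₁ L₂ hL₁ hL₂ (η t) (psi3 η ϕ t) (etaX1 (psi3 η ϕ) t) (etaX2 (psi3 η ϕ) t)
    (sη.ct t) (sψ.ct t) (sψ.s1.ct t) (sψ.s2.ct t) (sψ.d1 t) (sψ.d2 t) (hsol.eta_mean t ht)
    _ _ hq hE' hS'
  have dn := ww_Kup L₁ L₂ hL₁ hL₂ (fun x y => - η t x y) (psi3 η ϕ t) (etaX1 (psi3 η ϕ) t)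
    (etaX2 (psi3 η ϕ) t)
    cn.neg (sψ.ct t) (sψ.s1.ct t) (sψ.s2.ct t) (sψ.d1 t) (sψ.d2 t)
    (by simp only [intervalIntegral.integral_neg]; rw [hsol.eta_mean t ht, neg_zero])
    _ _ hq (by simp only [neg_sq]; exact hE') hS'
  simp only [neg_mul, intervalIntegral.integral_neg] at dn
  rw [abs_le]
  unfold wwK
  constructor
  · linarith
  · exact up
end

/-- Corollary 4.2 (`d = 2`): observability estimate `𝓑(T) ≥ 𝓗`
under the assumptions `η ≥ -4h/9`, `B < 2/9`, a lower bound on `T`, and the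
bounds `‖∇η‖_{L^∞} ≤ B`, `‖∇ψ‖_{L²} ≤ A√(2𝓗)`. -/
theorem observability_3d
    (L₁ L₂ h g T : ℝ) (hL₁ : 0 < L₁) (hL₂ : 0 < L₂) (hh : 0 < h) (hg : 0 < g) (hT0 : 0 < T)
    (η : ℝ → ℝ → ℝ → ℝ) (ϕ : ℝ → ℝ → ℝ → ℝ → ℝ)
    (hsol : IsWW3D L₁ L₂ h g T η ϕ)
    (heta : ∀ t ∈ Icc (0:ℝ) T, ∀ x₁ ∈ Icc (0:ℝ) L₁, ∀ x₂ ∈ Icc (0:ℝ) L₂,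
      -(4 * h / 9) ≤ η t x₁ x₂)
    (A B : ℝ) (hA : 0 < A) (hB : 0 < B) (hB9 : B < 2 / 9)
    (hT : T ≥ 4 / (2 - 9 * B) * (1 + 7 * max L₁ L₂ * A / Real.sqrt g))
    (hslope : ∀ t ∈ Icc (0:ℝ) T, ∀ x₁ ∈ Icc (0:ℝ) L₁, ∀ x₂ ∈ Icc (0:ℝ) L₂,
      Real.sqrt ((etaX1 η t x₁ x₂) ^ 2 + (etaX2 η t x₁ x₂) ^ 2) ≤ B)
    (hpsiL2 : ∀ t ∈ Icc (0:ℝ) T,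
      Real.sqrt (∫ x₁ in (0:ℝ)..L₁, ∫ x₂ in (0:ℝ)..L₂,
          ((psi3X1 η ϕ t x₁ x₂) ^ 2 + (psi3X2 η ϕ t x₁ x₂) ^ 2))
        ≤ A * Real.sqrt (2 * energy3D L₁ L₂ h g η ϕ 0)) :
    bigB L₁ L₂ g T η ϕ ≥ energy3D L₁ L₂ h g η ϕ 0 := by
  have h1 := ww_bigB hT0 hL₁ hL₂ hh hg hsol heta B hB hslope
  have k1 := abs_le.1 (ww_Kbound hL₁ hL₂ hh hg hsol A hA hpsiL2 T ⟨hT0.le, le_rfl⟩)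
  have k0 := abs_le.1 (ww_Kbound hL₁ hL₂ hh hg hsol A hA hpsiL2 0 ⟨le_rfl, hT0.le⟩)
  have hH : 0 ≤ energy3D L₁ L₂ h g η ϕ 0 := by
    have a := ww_D_nonneg hL₁ hL₂ hh hsol 0 ⟨le_rfl, hT0.le⟩
    have b := mul_nonneg hg.le (ww_E_nonneg hL₁ hL₂ (η 0))
    unfold energy3D
    linarith
  have hc : 0 < 2 - 9 * B := by linarith
  have hT' : 1 + 7 * max L₁ L₂ * A / Real.sqrt g ≤ (2 - 9 * B) / 4 * T := by
    have := mul_le_mul_of_nonneg_left hT (show 0 ≤ (2 - 9 * B) / 4 by linarith)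
    refine le_trans (le_of_eq ?_) this
    field_simp
  have h2 := mul_le_mul_of_nonneg_right hT' hH
  have e : 7 * max L₁ L₂ * A / Real.sqrt g = 7 * (max L₁ L₂ * A / Real.sqrt g) := by ring
  rw [e] at h2
  linarith
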